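/- arXiv:1312.3679 — 2 statements merged into one kernel-verified Lean document; each statement's English description precedes it below -/
import Mathlib

section
/- Let D be a weakly semisimple x-monotone drawing of K_n. Then there is a semisimple x-monotone drawing D' of K_n with the same vertex coordinates x_1 < ... < x_n such that: (1) σ_{D'} = σ_D (the same above/below relations of vertices and edges); (2) for every pair of edges, the parity of their number of crossings in D' equals the parity in D; and (3) for each vertex v_i and each pair of edges incident to v_i, the vertical order of the two edges in a sufficiently small punctured neighborhood to the right of v_i (respectively, to the left of v_i) is the same in D and D' (i.e., D and D' have the same rotation system). -/
/-- `Zval n` is Hill's conjectured value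
`Z(n) = (1/4)⌊n/2⌋⌊(n−1)/2⌋⌊(n−2)/2⌋⌊(n−3)/2⌋` for the crossing number of `K n`.
(The product of the four floors is always divisible by 4, so natural division is exact.) -/
def Zval (n : ℕ) : ℕ :=
  n / 2 * ((n - 1) / 2) * ((n - 2) / 2) * ((n - 3) / 2) / 4

/-- An x-monotone drawing of the complete graph `K n`: vertices `v i = (x i, 0)` with
`x` strictly increasing, and for each pair `i < j` a continuous function `e i j` on
`[x i, x j]` vanishing at the endpoints, whose graph is the arc of the edge `{i, j}`.
Edges avoid the intermediate vertices, any two distinct edges meet in finitely many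
interior parameters, and at each such common point the difference changes sign
(a proper crossing). -/
structure XMonotoneDrawing (n : ℕ) where
  x : Fin n → ℝ
  x_strictMono : StrictMono x
  e : Fin n → Fin n → ℝ → ℝ
  cont : ∀ i j : Fin n, i < j → ContinuousOn (e i j) (Set.Icc (x i) (x j))
  end_left : ∀ i j : Fin n, i < j → e i j (x i) = 0
  end_right : ∀ i j : Fin n, i < j → e i j (x j) = 0
  avoid_vertex : ∀ i m j : Fin n, i < m → m < j → e i j (x m) ≠ 0
  cross_finite : ∀ i j k l : Fin n, i < j → k < l → (i, j) ≠ (k, l) →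
    {t : ℝ | max (x i) (x k) < t ∧ t < min (x j) (x l) ∧ e i j t = e k l t}.Finite
  sign_change : ∀ i j k l : Fin n, i < j → k < l → (i, j) ≠ (k, l) →
    ∀ t : ℝ, max (x i) (x k) < t → t < min (x j) (x l) → e i j t = e k l t →
      ∃ ε > (0 : ℝ), ∀ s : ℝ, max (x i) (x k) < s → t - ε < s → s < t →
        ∀ u : ℝ, u < min (x j) (x l) → t < u → u < t + ε →
          (e i j s - e k l s) * (e i j u - e k l u) < 0

namespace XMonotoneDrawing

variable {n : ℕ}

/-- The set of parameters at which the edges `{i,j}` and `{k,l}` cross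
(both edges are parametrized over the `x`-axis). -/
def crossSet (D : XMonotoneDrawing n) (i j k l : Fin n) : Set ℝ :=
  {t : ℝ | max (D.x i) (D.x k) < t ∧ t < min (D.x j) (D.x l) ∧ D.e i j t = D.e k l t}

/-- The number of crossings between the edges `{i,j}` and `{k,l}`. -/
noncomputable def crossCount (D : XMonotoneDrawing n) (i j k l : Fin n) : ℕ :=
  (D.crossSet i j k l).ncard

/-- Two edges `{i,j}` and `{k,l}` are adjacent if they share an endpoint index. -/
def Adj (i j k l : Fin n) : Prop := i = k ∨ i = l ∨ j = k ∨ j = l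

/-- A drawing is semisimple if no two adjacent edges cross. -/
def Semisimple (D : XMonotoneDrawing n) : Prop :=
  ∀ i j k l : Fin n, i < j → k < l → (i, j) ≠ (k, l) → Adj i j k l →
    D.crossCount i j k l = 0

/-- A drawing is weakly semisimple if every two adjacent edges cross an even
number of times. -/
def WeaklySemisimple (D : XMonotoneDrawing n) : Prop :=
  ∀ i j k l : Fin n, i < j → k < l → (i, j) ≠ (k, l) → Adj i j k l →
    Even (D.crossCount i j k l)

/-- A drawing is simple if no two adjacent edges cross and every two non-adjacent
edges cross at most once. -/
def Simple (D : XMonotoneDrawing n) : Prop :=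
  ∀ i j k l : Fin n, i < j → k < l → (i, j) ≠ (k, l) →
    (Adj i j k l → D.crossCount i j k l = 0) ∧
    (¬ Adj i j k l → D.crossCount i j k l ≤ 1)

/-- `cr D`: the total number of crossings of `D`. (Each unordered pair of distinct
edges is counted twice in the sum, whence the division by 2; `crossCount` is
symmetric in the two edges.) -/
noncomputable def cr (D : XMonotoneDrawing n) : ℕ :=
  (∑ p : (Fin n × Fin n) × (Fin n × Fin n),
      if p.1.1 < p.1.2 ∧ p.2.1 < p.2.2 ∧ p.1 ≠ p.2 then
        D.crossCount p.1.1 p.1.2 p.2.1 p.2.2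
      else 0) / 2

/-- `ocr D`: the number of unordered pairs of edges of `D` crossing an odd number
of times. (Each unordered pair appears twice as an ordered pair.) -/
noncomputable def ocr (D : XMonotoneDrawing n) : ℕ :=
  {p : (Fin n × Fin n) × (Fin n × Fin n) |
    p.1.1 < p.1.2 ∧ p.2.1 < p.2.2 ∧ p.1 ≠ p.2 ∧
      Odd (D.crossCount p.1.1 p.1.2 p.2.1 p.2.2)}.ncard / 2

/-- The signature of the triple `i < j < k`: `true` (i.e. `+`) if the vertex `v j`
lies below the edge `{i, k}`, i.e. `e i k (x j) > 0`, and `false` (i.e. `−`) otherwise. -/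
noncomputable def sig (D : XMonotoneDrawing n) (i j k : Fin n) : Bool :=
  if 0 < D.e i k (D.x j) then true else false

/-- `D` realizes the signature function `σ` if `σ_D` and `σ` agree on all
increasing triples. -/
def Realizes (D : XMonotoneDrawing n) (σ : Fin n → Fin n → Fin n → Bool) : Prop :=
  ∀ i j k : Fin n, i < j → j < k → D.sig i j k = σ i j k

/-- A drawing is pseudolinear if its edges extend to continuous curves over all of `ℝ`
that avoid all vertices other than their endpoints and such that any two of these
extended curves cross exactly once (the crossing being a sign change of the difference). -/
def Pseudolinear (D : XMonotoneDrawing n) : Prop :=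
  ∃ p : Fin n → Fin n → ℝ → ℝ,
    (∀ i j : Fin n, i < j → Continuous (p i j)) ∧
    (∀ i j : Fin n, i < j → ∀ t ∈ Set.Icc (D.x i) (D.x j), p i j t = D.e i j t) ∧
    (∀ i j m : Fin n, i < j → m ≠ i → m ≠ j → p i j (D.x m) ≠ 0) ∧
    (∀ i j k l : Fin n, i < j → k < l → (i, j) ≠ (k, l) →
      ∃ t : ℝ, p i j t = p k l t ∧
        ∀ s u : ℝ, s < t → t < u →
          (p i j s - p k l s) * (p i j u - p k l u) < 0)

/-- The arc of the edge `{i, j}` as a subset of the plane `ℝ × ℝ`. -/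
def edgeArc (D : XMonotoneDrawing n) (i j : Fin n) : Set (ℝ × ℝ) :=
  {q : ℝ × ℝ | D.x i ≤ q.1 ∧ q.1 ≤ D.x j ∧ q.2 = D.e i j q.1}

/-- The union of all edge arcs of the drawing. -/
def arcUnion (D : XMonotoneDrawing n) : Set (ℝ × ℝ) :=
  ⋃ i : Fin n, ⋃ j : Fin n, ⋃ (_ : i < j), D.edgeArc i j

end XMonotoneDrawing

namespace Sig

variable {n : ℕ}

/-- With respect to a signature function `σ`, the vertex `m ∉ {i, j}` is on the left of
the directed edge `(i, j)` (where `i < j`). -/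
def LeftOf (σ : Fin n → Fin n → Fin n → Bool) (i j m : Fin n) : Prop :=
  (i < m ∧ m < j ∧ σ i m j = false) ∨ (m < i ∧ σ m i j = true) ∨ (j < m ∧ σ i j m = true)

/-- The number of vertices on the left of the directed edge `(i, j)`. -/
noncomputable def leftCount (σ : Fin n → Fin n → Fin n → Bool) (i j : Fin n) : ℕ :=
  {m : Fin n | LeftOf σ i j m}.ncard

/-- The edge `{i, j}` (with `i < j`) is a `k`-edge of `σ` if `min(ℓ, n − 2 − ℓ) = k`,
where `ℓ` is the number of vertices on its left. -/
def IsKEdge (σ : Fin n → Fin n → Fin n → Bool) (k : ℕ) (i j : Fin n) : Prop :=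
  min (leftCount σ i j) (n - 2 - leftCount σ i j) = k

/-- `Ek σ k`: the number of `k`-edges of `σ`. -/
noncomputable def Ek (σ : Fin n → Fin n → Fin n → Bool) (k : ℕ) : ℕ :=
  {p : Fin n × Fin n | p.1 < p.2 ∧ IsKEdge σ k p.1 p.2}.ncard

/-- `Ele σ k = E_{≤k}(σ)`: the number of `≤k`-edges of `σ`. -/
noncomputable def Ele (σ : Fin n → Fin n → Fin n → Bool) (k : ℕ) : ℕ :=
  ∑ i ∈ Finset.range (k + 1), Ek σ i

/-- `Elele σ k = E_{≤≤k}(σ) = Σ_{j=0}^{k} E_{≤j}(σ)`. -/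
noncomputable def Elele (σ : Fin n → Fin n → Fin n → Bool) (k : ℕ) : ℕ :=
  ∑ j ∈ Finset.range (k + 1), Ele σ j

/-- `E_{≤≤k}` with an integer index, which vanishes for negative `k`. -/
noncomputable def ElelZ (σ : Fin n → Fin n → Fin n → Bool) (k : ℤ) : ℕ :=
  if 0 ≤ k then Elele σ k.toNat else 0

/-- The left count of the edge `{i, j}` in the drawing restricted to the first
`n − 1` vertices (the last vertex deleted). -/
noncomputable def leftCountRes (σ : Fin n → Fin n → Fin n → Bool) (i j : Fin n) : ℕ :=
  {m : Fin n | LeftOf σ i j m ∧ (m : ℕ) + 1 < n}.ncard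

/-- The edge `{i, j}` is a `k`-edge of the restriction of `σ` to the first `n − 1`
vertices (there `min(ℓ', (n−1) − 2 − ℓ') = k`). -/
def IsKEdgeRes (σ : Fin n → Fin n → Fin n → Bool) (k : ℕ) (i j : Fin n) : Prop :=
  min (leftCountRes σ i j) (n - 3 - leftCountRes σ i j) = k

/-- The edge `{i, j}` is a `(D,D')`-invariant `≤k`-edge: it avoids the last vertex and
is an `m`-edge with `m ≤ k` both in `σ` and in the restriction of `σ` to the first
`n − 1` vertices. -/
def InvariantLeK (σ : Fin n → Fin n → Fin n → Bool) (k : ℕ) (i j : Fin n) : Prop :=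
  (j : ℕ) + 1 < n ∧ (∃ m ≤ k, IsKEdge σ m i j) ∧ (∃ m ≤ k, IsKEdgeRes σ m i j)

/-- The ten 4-tuple forms allowed in signature functions of semisimple x-monotone
drawings: `++++, −−−−, ++−−, −−++, −++−, +−−+, −−−+, +++−, +−−−, −+++`. -/
def AllowedForm (a b c d : Bool) : Prop :=
  (a, b, c, d) ∈ ([(true, true, true, true), (false, false, false, false),
    (true, true, false, false), (false, false, true, true),
    (false, true, true, false), (true, false, false, true),
    (false, false, false, true), (true, true, true, false),
    (true, false, false, false), (false, true, true, true)] :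
      List (Bool × Bool × Bool × Bool))

/-- A signature function is admissible if every increasing 4-tuple is of one of the
ten allowed forms. -/
def Admissible (σ : Fin n → Fin n → Fin n → Bool) : Prop :=
  ∀ a b c d : Fin n, a < b → b < c → c < d →
    AllowedForm (σ a b c) (σ a b d) (σ a c d) (σ b c d)

/-- The six convex forms: `++++, −−−−, ++−−, −−++, −++−, +−−+`. -/
def ConvexForm (a b c d : Bool) : Prop :=
  (a, b, c, d) ∈ ([(true, true, true, true), (false, false, false, false),
    (true, true, false, false), (false, false, true, true),
    (false, true, true, false), (true, false, false, true)] :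
      List (Bool × Bool × Bool × Bool))

/-- The 4-tuple `a < b < c < d` is convex in `σ`. -/
def Convex4 (σ : Fin n → Fin n → Fin n → Bool) (a b c d : Fin n) : Prop :=
  ConvexForm (σ a b c) (σ a b d) (σ a c d) (σ b c d)

/-- The eight 4-tuple forms of pseudolinear x-monotone drawings (the sign-monotone
sequences): `++++, +++−, ++−−, +−−−, −−−−, −−−+, −−++, −+++`. -/
def PLForm (a b c d : Bool) : Prop :=
  (a, b, c, d) ∈ ([(true, true, true, true), (true, true, true, false),
    (true, true, false, false), (true, false, false, false),
    (false, false, false, false), (false, false, false, true),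
    (false, false, true, true), (false, true, true, true)] :
      List (Bool × Bool × Bool × Bool))

/-- The relation `j ⋖ k` on `{j : i < j}`: `j ⋖ k` iff (`j < k` and `σ i j k = +`)
or (`k < j` and `σ i k j = −`). -/
def Below (σ : Fin n → Fin n → Fin n → Bool) (i j k : Fin n) : Prop :=
  (j < k ∧ σ i j k = true) ∨ (k < j ∧ σ i k j = false)

end Sig

namespace Sig

variable {n : ℕ}

/-- The relation `i` lower than `l` on `{i : i < k}`: the edge `{i, k}` arrives at `v k` below
the edge `{l, k}` according to `σ`. -/
def Lower (σ : Fin n → Fin n → Fin n → Bool) (k i l : Fin n) : Prop :=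
  (i < l ∧ σ i l k = false) ∨ (l < i ∧ σ l i k = true)

/-- The orders prescribed by `σ` at the right side and at the left side of every vertex are
transitive. -/
structure LocallyTransitive (σ : Fin n → Fin n → Fin n → Bool) : Prop where
  below_trans : ∀ a j k l : Fin n, a < j → a < k → a < l →
    Below σ a j k → Below σ a k l → Below σ a j l
  lower_trans : ∀ a i j k : Fin n, i < a → j < a → k < a →
    Lower σ a i j → Lower σ a j k → Lower σ a i k

variable {σ : Fin n → Fin n → Fin n → Bool}

theorem Below.asymm {a j k : Fin n} (h : Below σ a j k) : ¬ Below σ a k j := by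
  rcases h with ⟨h, h'⟩ | ⟨h, h'⟩ <;> rintro (⟨g, g'⟩ | ⟨g, g'⟩) <;>
    first | exact lt_asymm h g | simp_all

theorem Lower.asymm {a j k : Fin n} (h : Lower σ a j k) : ¬ Lower σ a k j := by
  rcases h with ⟨h, h'⟩ | ⟨h, h'⟩ <;> rintro (⟨g, g'⟩ | ⟨g, g'⟩) <;>
    first | exact lt_asymm h g | simp_all

theorem below_or_below (a : Fin n) {j k : Fin n} (h : j ≠ k) :
    Below σ a j k ∨ Below σ a k j := by
  unfold Below
  rcases lt_or_gt_of_ne h with h | h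
  · cases hs : σ a j k <;> simp [h]
  · cases hs : σ a k j <;> simp [h]

theorem lower_or_lower (a : Fin n) {j k : Fin n} (h : j ≠ k) :
    Lower σ a j k ∨ Lower σ a k j := by
  unfold Lower
  rcases lt_or_gt_of_ne h with h | h
  · cases hs : σ j k a <;> simp [h]
  · cases hs : σ k j a <;> simp [h]

theorem below_iff_of_lt {a j k : Fin n} (h : j < k) : Below σ a j k ↔ σ a j k = true := by
  simp [Below, h, h.not_gt]

theorem below_iff_of_gt {a j k : Fin n} (h : k < j) : Below σ a j k ↔ σ a k j = false := by
  simp [Below, h, h.not_gt]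

theorem lower_iff_of_lt {a j k : Fin n} (h : j < k) : Lower σ a j k ↔ σ j k a = false := by
  simp [Lower, h, h.not_gt]

theorem lower_iff_of_gt {a j k : Fin n} (h : k < j) : Lower σ a j k ↔ σ k j a = true := by
  simp [Lower, h, h.not_gt]

theorem Lower.ne {a j k : Fin n} (h : Lower σ a j k) : j ≠ k := by
  rintro rfl
  exact h.asymm h

theorem Below.ne {a j k : Fin n} (h : Below σ a j k) : j ≠ k := by
  rintro rfl
  exact h.asymm h

/-- A path row–column–row through the largest column `c` can be shortcut so as to avoid `c`. -/
theorem LocallyTransitive.shortcut (hσ : LocallyTransitive σ) {m a b k j c : Fin n}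
    (ha : a < m) (hb : b < m) (hk : m < k) (hj : m < j) (hkc : k < c) (hjc : j < c)
    (h₁ : Below σ a k c) (h₂ : Lower σ c a b) (h₃ : Below σ b c j) :
    (Below σ a k j ∧ Lower σ j a b) ∨ (Lower σ k a b ∧ Below σ b k j) := by
  have hac := (ha.trans hk).trans hkc
  have hbc := (hb.trans hk).trans hkc
  have hka : Lower σ c k a := by
    rw [lower_iff_of_gt (ha.trans hk)]; rwa [below_iff_of_lt hkc] at h₁
  have hbj : Lower σ c b j := by
    rw [lower_iff_of_lt (hb.trans hj)]; rwa [below_iff_of_gt hjc] at h₃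
  have haj : Below σ a c j := by
    have := hσ.lower_trans c a b j hac hbc hjc h₂ hbj
    rw [below_iff_of_gt hjc]; rwa [lower_iff_of_lt (ha.trans hj)] at this
  have hkb : Below σ b k c := by
    have := hσ.lower_trans c k a b hkc hac hbc hka h₂
    rw [below_iff_of_lt hkc]; rwa [lower_iff_of_gt (hb.trans hk)] at this
  have hakj := hσ.below_trans a k c j (ha.trans hk) hac (ha.trans hj) h₁ haj
  have hbkj := hσ.below_trans b k c j (hb.trans hk) hbc (hb.trans hj) hkb h₃
  rcases lower_or_lower (σ := σ) j h₂.ne with h | hlowj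
  · exact Or.inl ⟨hakj, h⟩
  rcases lower_or_lower (σ := σ) k h₂.ne with h | hlowk
  · exact Or.inr ⟨h, hbkj⟩
  exfalso
  rcases lt_or_gt_of_ne h₂.ne with hab | hab
  · rw [lower_iff_of_gt hab, ← below_iff_of_lt (hb.trans hk)] at hlowk
    rw [lower_iff_of_lt hab, ← below_iff_of_gt hbc] at h₂
    exact (hσ.below_trans a b k c hab (ha.trans hk) hac hlowk h₁).asymm h₂
  · rw [lower_iff_of_lt hab, ← below_iff_of_gt (ha.trans hj)] at hlowj
    rw [lower_iff_of_gt hab, ← below_iff_of_lt hac] at h₂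
    exact (hσ.below_trans b a c j hab hbc (hb.trans hj) h₂ h₃).asymm hlowj

/-- The constraints on the vertical order, at the vertex `m`, of the edges `(i, j)` with
`i < m < j` and `j < N`: edges with a common endpoint are ordered as prescribed by `σ`. -/
def LineRel (σ : Fin n → Fin n → Fin n → Bool) (m : Fin n) (N : ℕ) (p q : Fin n × Fin n) : Prop :=
  p.1 < m ∧ m < p.2 ∧ q.1 < m ∧ m < q.2 ∧ (p.2 : ℕ) < N ∧ (q.2 : ℕ) < N ∧
    ((p.1 = q.1 ∧ Below σ p.1 p.2 q.2) ∨ (p.2 = q.2 ∧ Lower σ p.2 p.1 q.1))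

open Relation

theorem LineRel.of_succ {m : Fin n} {N : ℕ} {p q : Fin n × Fin n} (h : LineRel σ m (N + 1) p q)
    (hp : (p.2 : ℕ) < N) (hq : (q.2 : ℕ) < N) : LineRel σ m N p q :=
  ⟨h.1, h.2.1, h.2.2.1, h.2.2.2.1, hp, hq, h.2.2.2.2.2.2⟩

/-- Paths between edges avoiding the last column can be chosen to avoid the last column. -/
theorem LocallyTransitive.transGen_of_succ (hσ : LocallyTransitive σ) {m : Fin n} {N : ℕ}
    {p q : Fin n × Fin n} (hp : (p.2 : ℕ) < N) (h : TransGen (LineRel σ m (N + 1)) p q) :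
    ((q.2 : ℕ) < N → TransGen (LineRel σ m N) p q) ∧
    ((q.2 : ℕ) = N → ∃ a k : Fin n, a < m ∧ m < k ∧ (k : ℕ) < N ∧
      ReflTransGen (LineRel σ m N) p (a, k) ∧ Below σ a k q.2 ∧
      (a = q.1 ∨ Lower σ q.2 a q.1)) := by
  induction h with
  | single h =>
    refine ⟨fun hq => .single (h.of_succ hp hq), fun hq => ?_⟩
    obtain ⟨h1, h2, h3, h4, h5, h6, h7⟩ := h
    rcases h7 with ⟨e, h7⟩ | ⟨e, h7⟩
    · exact ⟨_, _, h1, h2, hp, .refl, h7, .inl e⟩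
    · rw [e] at hp; omega
  | @tail b c hb h ih =>
    have h' := h
    obtain ⟨h1, h2, h3, h4, h5, h6, h7⟩ := h
    refine ⟨fun hc => ?_, fun hc => ?_⟩
    · rcases Nat.lt_or_eq_of_le (Nat.lt_succ_iff.1 h5) with hbN | hbN
      · exact (ih.1 hbN).tail (h'.of_succ hbN hc)
      · obtain ⟨a, k, ha, hk, hkN, hpa, hak, hab⟩ := ih.2 hbN
        have hkb : k < b.2 := by rw [Fin.lt_def]; omega
        have hcb : c.2 < b.2 := by rw [Fin.lt_def]; omega
        rcases h7 with ⟨e, h7⟩ | ⟨e, h7⟩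
        · rcases hab with rfl | hab
          · refine .tail' hpa ⟨ha, hk, h3, h4, hkN, hc, .inl ⟨e, ?_⟩⟩
            exact hσ.below_trans _ _ _ _ (ha.trans hk) (ha.trans h2) (ha.trans h4) hak h7
          · rcases hσ.shortcut ha h1 hk h4 hkb hcb hak hab h7 with ⟨g, g'⟩ | ⟨g, g'⟩
            · refine .tail (b := (a, c.2)) (.tail' hpa ⟨ha, hk, ha, h4, hkN, hc, .inl ⟨rfl, g⟩⟩) ?_
              exact ⟨ha, h4, h3, h4, hc, hc, .inr ⟨rfl, e ▸ g'⟩⟩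
            · refine .tail (b := (b.1, k)) (.tail' hpa ⟨ha, hk, h1, hk, hkN, hkN, .inr ⟨rfl, g⟩⟩) ?_
              exact ⟨h1, hk, h3, h4, hkN, hc, .inl ⟨e, g'⟩⟩
        · rw [e] at hbN; omega
    · rcases Nat.lt_or_eq_of_le (Nat.lt_succ_iff.1 h5) with hbN | hbN
      · rcases h7 with ⟨e, h7⟩ | ⟨e, h7⟩
        · exact ⟨b.1, b.2, h1, h2, hbN, (ih.1 hbN).to_reflTransGen, h7, .inl e⟩
        · rw [e] at hbN; omega
      · obtain ⟨a, k, ha, hk, hkN, hpa, hak, hab⟩ := ih.2 hbN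
        have hbc : b.2 = c.2 := by rw [Fin.ext_iff]; omega
        rcases h7 with ⟨e, h7⟩ | ⟨e, h7⟩
        · exact absurd hbc h7.ne
        · rw [hbc] at hak hab h7
          refine ⟨a, k, ha, hk, hkN, hpa, hak, .inr ?_⟩
          rcases hab with rfl | hab
          · exact h7
          · exact hσ.lower_trans _ _ _ _ (ha.trans h4) (h1.trans h4) (h3.trans h4) hab h7

/-- A path starting in the last column stays in that column or visits another one. -/
theorem LocallyTransitive.transGen_last (hσ : LocallyTransitive σ) {m : Fin n} {N : ℕ}
    {p q : Fin n × Fin n} (hp : (p.2 : ℕ) = N) (h : TransGen (LineRel σ m (N + 1)) p q) :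
    (p.1 < m ∧ m < p.2 ∧ q.1 < m ∧ q.2 = p.2 ∧ Lower σ p.2 p.1 q.1) ∨
    ∃ r : Fin n × Fin n, (r.2 : ℕ) < N ∧ TransGen (LineRel σ m (N + 1)) p r ∧
      ReflTransGen (LineRel σ m (N + 1)) r q := by
  induction h with
  | @single b h =>
    have h' := h
    obtain ⟨h1, h2, h3, h4, h5, h6, h7⟩ := h
    rcases Nat.lt_or_eq_of_le (Nat.lt_succ_iff.1 h6) with hN | hN
    · exact .inr ⟨b, hN, .single h', .refl⟩
    · have e : b.2 = p.2 := by rw [Fin.ext_iff]; omega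
      rcases h7 with ⟨_, h7⟩ | ⟨_, h7⟩
      · exact absurd e.symm h7.ne
      · exact .inl ⟨h1, h2, h3, e, h7⟩
  | @tail b c hb h ih =>
    rcases ih with ⟨g1, g2, g3, g4, g5⟩ | ⟨r, hr, hpr, hrb⟩
    · have h' := h
      obtain ⟨h1, h2, h3, h4, h5, h6, h7⟩ := h
      rcases Nat.lt_or_eq_of_le (Nat.lt_succ_iff.1 h6) with hN | hN
      · exact .inr ⟨c, hN, hb.tail h', .refl⟩
      · have e : c.2 = p.2 := by rw [Fin.ext_iff]; omega
        rcases h7 with ⟨_, h7⟩ | ⟨_, h7⟩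
        · exact absurd (g4.trans e.symm) h7.ne
        · rw [g4] at h7
          exact .inl ⟨g1, g2, h3, e, hσ.lower_trans _ _ _ _ (g1.trans g2) (g3.trans g2)
            (h3.trans g2) g5 h7⟩
    · exact .inr ⟨r, hr, hpr, hrb.tail h⟩

theorem LocallyTransitive.lineRel_acyclic (hσ : LocallyTransitive σ) (m : Fin n) (N : ℕ)
    (p : Fin n × Fin n) : ¬ TransGen (LineRel σ m N) p p := by
  induction N generalizing p with
  | zero =>
    intro h
    obtain ⟨_, -, h⟩ := TransGen.tail'_iff.1 h
    exact absurd h.2.2.2.2.1 (Nat.not_lt_zero _)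
  | succ N ih =>
    have key : ∀ r : Fin n × Fin n, (r.2 : ℕ) < N → ¬ TransGen (LineRel σ m (N + 1)) r r :=
      fun r hr h => ih r ((hσ.transGen_of_succ hr h).1 hr)
    intro h
    obtain ⟨_, -, h'⟩ := TransGen.tail'_iff.1 h
    rcases Nat.lt_or_eq_of_le (Nat.lt_succ_iff.1 h'.2.2.2.2.2.1) with hN | hN
    · exact key p hN h
    · rcases hσ.transGen_last hN h with ⟨-, -, -, -, g⟩ | ⟨r, hr, hpr, hrp⟩
      · exact g.asymm g
      · exact key r hr (TransGen.trans_right hrp hpr)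

/-- A finite acyclic relation admits an injective strictly monotone map to `ℕ`. -/
theorem exists_injective_strictMono_of_acyclic {P : Type*} [Fintype P] {r : P → P → Prop}
    (h : ∀ p, ¬ TransGen r p p) :
    ∃ g : P → ℕ, Function.Injective g ∧ ∀ p q, r p q → g p < g q := by
  classical
  let c : P → ℕ := fun p => (Finset.univ.filter fun q => TransGen r q p).card
  have hc : ∀ p q, r p q → c p < c q := by
    intro p q hpq
    refine Finset.card_lt_card ⟨fun s hs => ?_, fun hs => ?_⟩
    · simp only [Finset.mem_filter, Finset.mem_univ, true_and] at hs ⊢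
      exact hs.tail hpq
    · have : p ∈ Finset.univ.filter fun s => TransGen r s q := by simpa using .single hpq
      exact h p (by simpa using hs this)
  let f := Fintype.equivFin P
  refine ⟨fun p => (f p : ℕ) + Fintype.card P * c p, fun p q hpq => ?_, fun p q hpq => ?_⟩
  · have := congrArg (· % Fintype.card P) hpq
    simp only [Nat.add_mul_mod_self_left, Nat.mod_eq_of_lt (f _).isLt] at this
    exact f.injective (Fin.ext this)
  · have h1 := (f p).isLt
    have h2 : Fintype.card P * (c p + 1) ≤ Fintype.card P * c q := Nat.mul_le_mul_left _ (hc p q hpq)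
    simp only
    rw [mul_add] at h2
    omega

/-- The heights of the edges at the vertex `m`. -/
theorem LocallyTransitive.exists_heights (hσ : LocallyTransitive σ) (m : Fin n) :
    ∃ V : Fin n → Fin n → ℝ,
      (∀ i j, σ i m j = true → 0 < V i j) ∧ (∀ i j, σ i m j = false → V i j < 0) ∧
      (∀ i j k l, V i j = V k l → (i, j) = (k, l)) ∧
      (∀ i j l, i < m → m < j → m < l → Below σ i j l → V i j < V i l) ∧
      (∀ i k j, i < m → k < m → m < j → Lower σ j i k → V i j < V k j) := by
  obtain ⟨g, hg, hmono⟩ := exists_injective_strictMono_of_acyclic (hσ.lineRel_acyclic m n)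
  let V : Fin n → Fin n → ℝ := fun i j =>
    if σ i m j = true then Real.exp (g (i, j)) else - Real.exp (-(g (i, j)))
  have hpos : ∀ i j, σ i m j = true → V i j = Real.exp (g (i, j)) := fun i j h => if_pos h
  have hneg : ∀ i j, σ i m j = false → V i j = - Real.exp (-(g (i, j))) :=
    fun i j h => if_neg (by simp [h])
  have hlt : ∀ i j k l, g (i, j) < g (k, l) → (σ i m j = true → σ k m l = true) →
      V i j < V k l := by
    intro i j k l h hs
    have h' : (g (i, j) : ℝ) < g (k, l) := by exact_mod_cast h
    cases h1 : σ i m j <;> cases h2 : σ k m l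
    · rw [hneg _ _ h1, hneg _ _ h2]
      simpa using h'
    · rw [hneg _ _ h1, hpos _ _ h2]
      exact (neg_lt_zero.2 (Real.exp_pos _)).trans (Real.exp_pos _)
    · simp [hs h1] at h2
    · rw [hpos _ _ h1, hpos _ _ h2]
      simpa using h'
  refine ⟨V, fun i j h => ?_, fun i j h => ?_, fun i j k l h => ?_, ?_, ?_⟩
  · rw [hpos _ _ h]; exact Real.exp_pos _
  · rw [hneg _ _ h]; exact neg_lt_zero.2 (Real.exp_pos _)
  · cases h1 : σ i m j <;> cases h2 : σ k m l
    · rw [hneg _ _ h1, hneg _ _ h2] at h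
      exact hg (by simpa using h)
    · rw [hneg _ _ h1, hpos _ _ h2] at h
      linarith [Real.exp_pos (-(g (i, j))), Real.exp_pos (g (k, l))]
    · rw [hpos _ _ h1, hneg _ _ h2] at h
      linarith [Real.exp_pos (g (i, j)), Real.exp_pos (-(g (k, l)))]
    · rw [hpos _ _ h1, hpos _ _ h2] at h
      exact hg (by simpa using h)
  · intro i j l hi hj hl h
    refine hlt _ _ _ _ (hmono _ _ ⟨hi, hj, hi, hl, j.2, l.2, .inl ⟨rfl, h⟩⟩) fun hs => ?_
    rw [← below_iff_of_lt hj] at hs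
    rw [← below_iff_of_lt hl]
    exact hσ.below_trans _ _ _ _ hi (hi.trans hj) (hi.trans hl) hs h
  · intro i k j hi hk hj h
    refine hlt _ _ _ _ (hmono _ _ ⟨hi, hj, hk, hj, j.2, j.2, .inr ⟨rfl, h⟩⟩) fun hs => ?_
    rw [← lower_iff_of_gt hi] at hs
    rw [← lower_iff_of_gt hk]
    exact hσ.lower_trans _ _ _ _ hj (hi.trans hj) (hk.trans hj) hs h

end Sig

/-- A function `f` on `[p, q]` has finitely many zeros in the open interval `(p, q)`, and it
changes its sign at each of them. -/
structure ProperZeros (f : ℝ → ℝ) (p q : ℝ) : Prop where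
  cont : ContinuousOn f (Set.Icc p q)
  finite : {t : ℝ | p < t ∧ t < q ∧ f t = 0}.Finite
  sign_change : ∀ t, p < t → t < q → f t = 0 →
    ∃ ε > (0 : ℝ), ∀ s, p < s → t - ε < s → s < t →
      ∀ u, u < q → t < u → u < t + ε → f s * f u < 0

namespace ProperZeros

variable {f : ℝ → ℝ} {p q : ℝ}

theorem mono (h : ProperZeros f p q) {p' q' : ℝ} (hp : p ≤ p') (hq : q' ≤ q) :
    ProperZeros f p' q' where
  cont := h.cont.mono (Set.Icc_subset_Icc hp hq)
  finite := h.finite.subset fun _ ht => ⟨hp.trans_lt ht.1, ht.2.1.trans_le hq, ht.2.2⟩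
  sign_change t h1 h2 h3 := by
    obtain ⟨ε, hε, H⟩ := h.sign_change t (hp.trans_lt h1) (h2.trans_le hq) h3
    exact ⟨ε, hε, fun s hs hs' hs'' u hu => H s (hp.trans_lt hs) hs' hs'' u (hu.trans_le hq)⟩

theorem mul_pos_of_ne_zero (hf : ContinuousOn f (Set.Icc p q)) (hpq : p ≤ q)
    (h : ∀ t ∈ Set.Icc p q, f t ≠ 0) : 0 < f p * f q := by
  by_contra hneg
  have hp := h p (Set.left_mem_Icc.2 hpq)
  have hq := h q (Set.right_mem_Icc.2 hpq)
  rcases lt_or_gt_of_ne hp with hp | hp <;> rcases lt_or_gt_of_ne hq with hq | hq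
  · exact hneg (mul_pos_of_neg_of_neg hp hq)
  · obtain ⟨t, ht, ht0⟩ := intermediate_value_Icc hpq hf ⟨hp.le, hq.le⟩
    exact h t ht ht0
  · obtain ⟨t, ht, ht0⟩ := intermediate_value_Icc' hpq hf ⟨hq.le, hp.le⟩
    exact h t ht ht0
  · exact hneg (mul_pos hp hq)

/-- The number of zeros is odd if and only if the signs at the endpoints differ. -/
theorem odd_ncard_iff (h : ProperZeros f p q) (hpq : p < q) (hp : f p ≠ 0) (hq : f q ≠ 0) :
    Odd {t : ℝ | p < t ∧ t < q ∧ f t = 0}.ncard ↔ f p * f q < 0 := by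
  obtain ⟨k, hk⟩ : ∃ k, {t : ℝ | p < t ∧ t < q ∧ f t = 0}.ncard = k := ⟨_, rfl⟩
  induction k generalizing p with
  | zero =>
    rw [Set.ncard_eq_zero h.finite] at hk
    have : 0 < f p * f q := by
      refine mul_pos_of_ne_zero h.cont hpq.le fun t ht h0 => ?_
      rcases ht.1.eq_or_lt with rfl | h1
      · exact hp h0
      rcases ht.2.eq_or_lt with rfl | h2
      · exact hq h0
      exact hk.le (show t ∈ {t : ℝ | p < t ∧ t < q ∧ f t = 0} from ⟨h1, h2, h0⟩)
    simp [hk, this.le]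
  | succ k ih =>
    set Z := {t : ℝ | p < t ∧ t < q ∧ f t = 0} with hZ
    have hne : Z.Nonempty := by
      exact (Set.ncard_pos h.finite).1 (hk ▸ Nat.succ_pos k)
    obtain ⟨t, htZ, hmin⟩ := Set.exists_min_image Z id h.finite hne
    simp only [id] at hmin
    obtain ⟨hpt, htq, ht0⟩ := htZ
    obtain ⟨ε, hε, H⟩ := h.sign_change t hpt htq ht0
    obtain ⟨δ, hδ, hδZ⟩ : ∃ δ > 0, ∀ u, t < u → u < t + δ → f u ≠ 0 ∧ u < q := by
      have hopen : IsOpen (Z \ {t})ᶜ := (h.finite.subset Set.sdiff_subset).isClosed.isOpen_compl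
      obtain ⟨δ, hδ, hb⟩ := Metric.isOpen_iff.1 hopen t (by simp)
      refine ⟨min δ (q - t), lt_min hδ (by linarith), fun u h1 h2 => ?_⟩
      have h3 : u < t + δ := h2.trans_le (by linarith [min_le_left δ (q - t)])
      have h4 : u < q := h2.trans_le (by linarith [min_le_right δ (q - t)])
      refine ⟨fun h0 => hb (a := u) ?_ ⟨⟨hpt.trans h1, h4, h0⟩, ?_⟩, h4⟩
      · rw [Metric.mem_ball, Real.dist_eq, abs_of_pos] <;> linarith
      · exact h1.ne'
    set u := t + min ε δ / 2 with hu
    have hm : 0 < min ε δ := lt_min hε hδ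
    have hm1 := min_le_left ε δ
    have hm2 := min_le_right ε δ
    obtain ⟨hu0, huq⟩ := hδZ u (by linarith) (by linarith)
    obtain ⟨s, hs1, hs2⟩ := exists_between (max_lt hpt (by linarith : t - ε < t))
    obtain ⟨hps, hεs⟩ := max_lt_iff.1 hs1
    have hsu : f s * f u < 0 := H s hps hεs hs2 u huq (by linarith) (by linarith)
    have hps' : 0 < f p * f s := by
      refine mul_pos_of_ne_zero (h.cont.mono (Set.Icc_subset_Icc_right (by linarith))) hps.le ?_
      intro v hv h0
      rcases hv.1.eq_or_lt with rfl | h1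
      · exact hp h0
      linarith [hmin v ⟨h1, by linarith [hv.2], h0⟩, hv.2]
    have hZ' : {v : ℝ | u < v ∧ v < q ∧ f v = 0} = Z \ {t} := by
      ext v
      constructor
      · rintro ⟨h1, h2, h3⟩
        exact ⟨⟨by linarith, h2, h3⟩, fun h4 => by
          rw [Set.mem_singleton_iff] at h4; linarith⟩
      · rintro ⟨h1, h2⟩
        refine ⟨?_, h1.2⟩
        by_contra hvu
        have h4 : t < v := lt_of_le_of_ne (hmin v h1) fun h => h2 h.symm
        exact (hδZ v h4 (by linarith [not_lt.1 hvu])).1 h1.2.2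
    have hcard : {v : ℝ | u < v ∧ v < q ∧ f v = 0}.ncard = k := by
      rw [hZ', Set.ncard_sdiff_singleton_of_mem (show t ∈ Z from ⟨hpt, htq, ht0⟩), hk]; rfl
    have hrec := ih (h.mono (by linarith) le_rfl) huq hu0 hcard
    rw [hcard] at hrec
    rw [hk, Nat.odd_add_one, hrec]
    have hpu : f p * f u < 0 := by
      by_contra hcon
      nlinarith [mul_nonneg (not_lt.1 hcon) (mul_self_nonneg (f s)),
        mul_neg_of_pos_of_neg hps' hsu]
    constructor
    · intro h1
      have h2 : 0 < f u * f q := lt_of_le_of_ne (not_lt.1 h1) (mul_ne_zero hu0 hq).symm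
      by_contra hcon
      nlinarith [mul_nonneg (not_lt.1 hcon) (mul_self_nonneg (f u)), mul_neg_of_neg_of_pos hpu h2]
    · intro h1 h2
      nlinarith [mul_pos_of_neg_of_neg h1 h2, mul_self_nonneg (f q), mul_neg_of_neg_of_pos hpu
        (mul_self_pos.2 hq)]

theorem exists_margin (h : ProperZeros f p q) (hpq : p < q) :
    ∃ ε > (0 : ℝ), p + ε ≤ q ∧ ∀ t, p < t → t < q → f t = 0 → p + ε ≤ t ∧ t ≤ q - ε := by
  set Z := {t : ℝ | p < t ∧ t < q ∧ f t = 0} with hZ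
  rcases Z.eq_empty_or_nonempty with he | hne
  · refine ⟨q - p, by linarith, by linarith, fun t h1 h2 h3 => ?_⟩
    exact absurd (show t ∈ Z from ⟨h1, h2, h3⟩) (by simp [he])
  · obtain ⟨a, ⟨ha1, ha2, -⟩, ha⟩ := Set.exists_min_image Z id h.finite hne
    obtain ⟨b, ⟨hb1, hb2, -⟩, hb⟩ := Set.exists_max_image Z id h.finite hne
    simp only [id] at ha hb
    have := min_le_left (a - p) (q - b)
    have := min_le_right (a - p) (q - b)
    refine ⟨min (a - p) (q - b), lt_min (by linarith) (by linarith), by linarith, ?_⟩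
    intro t h1 h2 h3
    have := ha t ⟨h1, h2, h3⟩
    have := hb t ⟨h1, h2, h3⟩
    constructor <;> linarith

theorem mul_pos_near_left (h : ProperZeros f p q) (hpq : p < q) (hq : f q ≠ 0)
    (heven : Even {t : ℝ | p < t ∧ t < q ∧ f t = 0}.ncard) :
    ∃ ε > (0 : ℝ), ∀ t ∈ Set.Ioo p (p + ε), 0 < f t * f q := by
  obtain ⟨ε, hε, hεq, H⟩ := h.exists_margin hpq
  refine ⟨ε, hε, fun t ht => ?_⟩
  have htq : t < q := ht.2.trans_le hεq
  have ht0 : f t ≠ 0 := fun h0 => by linarith [(H t ht.1 htq h0).1, ht.2]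
  have hset : {v : ℝ | t < v ∧ v < q ∧ f v = 0} = {v : ℝ | p < v ∧ v < q ∧ f v = 0} := by
    ext v
    exact ⟨fun hv => ⟨ht.1.trans hv.1, hv.2⟩,
      fun hv => ⟨ht.2.trans_le (H v hv.1 hv.2.1 hv.2.2).1, hv.2⟩⟩
  have := (h.mono ht.1.le le_rfl).odd_ncard_iff htq ht0 hq
  rw [hset, ← Nat.not_even_iff_odd] at this
  exact lt_of_le_of_ne (not_lt.1 fun hlt => this.2 hlt heven) (mul_ne_zero ht0 hq).symm

theorem mul_pos_near_right (h : ProperZeros f p q) (hpq : p < q) (hp : f p ≠ 0)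
    (heven : Even {t : ℝ | p < t ∧ t < q ∧ f t = 0}.ncard) :
    ∃ ε > (0 : ℝ), ∀ t ∈ Set.Ioo (q - ε) q, 0 < f p * f t := by
  obtain ⟨ε, hε, hεq, H⟩ := h.exists_margin hpq
  refine ⟨ε, hε, fun t ht => ?_⟩
  have hpt : p < t := by linarith [ht.1]
  have ht0 : f t ≠ 0 := fun h0 => by linarith [(H t hpt ht.2 h0).2, ht.1]
  have hset : {v : ℝ | p < v ∧ v < t ∧ f v = 0} = {v : ℝ | p < v ∧ v < q ∧ f v = 0} := by
    ext v
    exact ⟨fun hv => ⟨hv.1, hv.2.1.trans ht.2, hv.2.2⟩,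
      fun hv => ⟨hv.1, (H v hv.1 hv.2.1 hv.2.2).2.trans_lt ht.1, hv.2.2⟩⟩
  have := (h.mono le_rfl ht.2.le).odd_ncard_iff hpt hp ht0
  rw [hset, ← Nat.not_even_iff_odd] at this
  exact lt_of_le_of_ne (not_lt.1 fun hlt => this.2 hlt heven) (mul_ne_zero hp ht0).symm

end ProperZeros

namespace XMonotoneDrawing

variable {n : ℕ} (D : XMonotoneDrawing n)

theorem crossSet_eq (i j k l : Fin n) : D.crossSet i j k l =
    {t : ℝ | max (D.x i) (D.x k) < t ∧ t < min (D.x j) (D.x l) ∧ D.e i j t - D.e k l t = 0} := by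
  simp only [crossSet, sub_eq_zero]

theorem properZeros {i j k l : Fin n} (hij : i < j) (hkl : k < l) (hne : (i, j) ≠ (k, l)) :
    ProperZeros (fun t => D.e i j t - D.e k l t) (max (D.x i) (D.x k))
      (min (D.x j) (D.x l)) where
  cont := ((D.cont i j hij).mono (Set.Icc_subset_Icc (le_max_left _ _) (min_le_left _ _))).sub
    ((D.cont k l hkl).mono (Set.Icc_subset_Icc (le_max_right _ _) (min_le_right _ _)))
  finite := by simpa only [sub_eq_zero] using D.cross_finite i j k l hij hkl hne
  sign_change t h1 h2 h3 := D.sign_change i j k l hij hkl hne t h1 h2 (sub_eq_zero.1 h3)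

theorem sig_eq_true_iff (i j k : Fin n) : D.sig i j k = true ↔ 0 < D.e i k (D.x j) := by
  simp [sig]

theorem sig_eq_false_iff {i j k : Fin n} (hij : i < j) (hjk : j < k) :
    D.sig i j k = false ↔ D.e i k (D.x j) < 0 := by
  have := D.avoid_vertex i j k hij hjk
  simp only [sig, Bool.if_false_right, Bool.and_true, decide_eq_false_iff_not, not_lt]
  exact ⟨fun h => lt_of_le_of_ne h this, le_of_lt⟩

variable {D}

theorem Semisimple.weaklySemisimple (h : D.Semisimple) : D.WeaklySemisimple :=
  fun i j k l hij hkl hne ha => by simp [h i j k l hij hkl hne ha]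

/-- In a weakly semisimple drawing the order of the edges at the right side of a vertex is
given by the signature. -/
theorem WeaklySemisimple.lt_near_left_iff (hD : D.WeaklySemisimple) {i j j' : Fin n}
    (hij : i < j) (hij' : i < j') (hne : j ≠ j') :
    ∃ ε > (0 : ℝ), ∀ t ∈ Set.Ioo (D.x i) (D.x i + ε),
      (D.e i j t < D.e i j' t ↔ Sig.Below D.sig i j j') := by
  have hne' : (i, j) ≠ (i, j') := by simpa using hne
  have hZ := D.properZeros hij hij' hne'
  have heven := hD i j i j' hij hij' hne' (.inl rfl)
  rw [crossCount, crossSet_eq] at heven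
  rw [max_self] at hZ heven
  rcases lt_or_gt_of_ne hne with h | h
  · have hmin : min (D.x j) (D.x j') = D.x j := min_eq_left (D.x_strictMono h).le
    rw [hmin] at hZ heven
    have hq := D.avoid_vertex i j j' hij h
    have h0 := D.end_right i j hij
    obtain ⟨ε, hε, H⟩ := hZ.mul_pos_near_left (D.x_strictMono hij) (by simpa [h0] using hq) heven
    refine ⟨ε, hε, fun t ht => ?_⟩
    have := H t ht
    simp only [h0, zero_sub] at this
    rw [Sig.below_iff_of_lt h, sig_eq_true_iff]
    constructor <;> intro <;> nlinarith
  · have hmin : min (D.x j) (D.x j') = D.x j' := min_eq_right (D.x_strictMono h).le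
    rw [hmin] at hZ heven
    have hq := D.avoid_vertex i j' j hij' h
    have h0 := D.end_right i j' hij'
    obtain ⟨ε, hε, H⟩ := hZ.mul_pos_near_left (D.x_strictMono hij') (by simpa [h0] using hq) heven
    refine ⟨ε, hε, fun t ht => ?_⟩
    have := H t ht
    simp only [h0, sub_zero] at this
    rw [Sig.below_iff_of_gt h, D.sig_eq_false_iff hij' h]
    constructor <;> intro <;> nlinarith

/-- In a weakly semisimple drawing the order of the edges at the left side of a vertex is
given by the signature. -/
theorem WeaklySemisimple.lt_near_right_iff (hD : D.WeaklySemisimple) {a a' i : Fin n}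
    (hai : a < i) (hai' : a' < i) (hne : a ≠ a') :
    ∃ ε > (0 : ℝ), ∀ t ∈ Set.Ioo (D.x i - ε) (D.x i),
      (D.e a i t < D.e a' i t ↔ Sig.Lower D.sig i a a') := by
  have hne' : (a, i) ≠ (a', i) := by simpa using hne
  have hZ := D.properZeros hai hai' hne'
  have heven := hD a i a' i hai hai' hne' (.inr (.inr (.inr rfl)))
  rw [crossCount, crossSet_eq] at heven
  rw [min_self] at hZ heven
  rcases lt_or_gt_of_ne hne with h | h
  · have hmax : max (D.x a) (D.x a') = D.x a' := max_eq_right (D.x_strictMono h).le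
    rw [hmax] at hZ heven
    have hq := D.avoid_vertex a a' i h hai'
    have h0 := D.end_left a' i hai'
    obtain ⟨ε, hε, H⟩ := hZ.mul_pos_near_right (D.x_strictMono hai') (by simpa [h0] using hq) heven
    refine ⟨ε, hε, fun t ht => ?_⟩
    have := H t ht
    simp only [h0, sub_zero] at this
    rw [Sig.lower_iff_of_lt h, D.sig_eq_false_iff h hai']
    constructor <;> intro <;> nlinarith
  · have hmax : max (D.x a) (D.x a') = D.x a := max_eq_left (D.x_strictMono h).le
    rw [hmax] at hZ heven
    have hq := D.avoid_vertex a' a i h hai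
    have h0 := D.end_left a i hai
    obtain ⟨ε, hε, H⟩ := hZ.mul_pos_near_right (D.x_strictMono hai) (by simpa [h0] using hq) heven
    refine ⟨ε, hε, fun t ht => ?_⟩
    have := H t ht
    simp only [h0, zero_sub] at this
    rw [Sig.lower_iff_of_gt h, sig_eq_true_iff]
    constructor <;> intro <;> nlinarith

theorem WeaklySemisimple.locallyTransitive (hD : D.WeaklySemisimple) :
    Sig.LocallyTransitive D.sig where
  below_trans a j k l hj hk hl h hnext := by
    have hjl : j ≠ l := by
      rintro rfl
      exact h.asymm hnext
    obtain ⟨ε₁, h₁, H₁⟩ := hD.lt_near_left_iff hj hk h.ne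
    obtain ⟨ε₂, h₂, H₂⟩ := hD.lt_near_left_iff hk hl hnext.ne
    obtain ⟨ε₃, h₃, H₃⟩ := hD.lt_near_left_iff hj hl hjl
    obtain ⟨δ, hδ, hlt⟩ := exists_between (lt_min h₁ (lt_min h₂ h₃))
    simp only [lt_min_iff] at hlt
    refine (H₃ (D.x a + δ) ⟨by linarith, by linarith⟩).1 (lt_trans
      ((H₁ (D.x a + δ) ⟨by linarith, by linarith⟩).2 h)
      ((H₂ (D.x a + δ) ⟨by linarith, by linarith⟩).2 hnext))
  lower_trans a i j k hi hj hk h hnext := by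
    have hik : i ≠ k := by
      rintro rfl
      exact h.asymm hnext
    obtain ⟨ε₁, h₁, H₁⟩ := hD.lt_near_right_iff hi hj h.ne
    obtain ⟨ε₂, h₂, H₂⟩ := hD.lt_near_right_iff hj hk hnext.ne
    obtain ⟨ε₃, h₃, H₃⟩ := hD.lt_near_right_iff hi hk hik
    obtain ⟨δ, hδ, hlt⟩ := exists_between (lt_min h₁ (lt_min h₂ h₃))
    simp only [lt_min_iff] at hlt
    refine (H₃ (D.x a - δ) ⟨by linarith, by linarith⟩).1 (lt_trans
      ((H₁ (D.x a - δ) ⟨by linarith, by linarith⟩).2 h)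
      ((H₂ (D.x a - δ) ⟨by linarith, by linarith⟩).2 hnext))

/-- For edges without a common endpoint the parity of the number of crossings is determined by
the signature. -/
theorem odd_crossCount_iff_of_sig_eq {D D' : XMonotoneDrawing n} (hx : D'.x = D.x)
    (hsig : ∀ i j k : Fin n, i < j → j < k → D'.sig i j k = D.sig i j k) {i j k l : Fin n}
    (hij : i < j) (hkl : k < l) (hik : i ≠ k) (hjl : j ≠ l) :
    Odd (D'.crossCount i j k l) ↔ Odd (D.crossCount i j k l) := by
  have hne : (i, j) ≠ (k, l) := fun h => hik (Prod.ext_iff.1 h).1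
  rcases le_or_gt (min (D.x j) (D.x l)) (max (D.x i) (D.x k)) with hpq | hpq
  · have h1 : D.crossSet i j k l = ∅ := Set.eq_empty_of_forall_notMem fun t ht =>
      absurd (ht.1.trans ht.2.1) (not_lt.2 hpq)
    have h2 : D'.crossSet i j k l = ∅ := Set.eq_empty_of_forall_notMem fun t ht =>
      absurd (ht.1.trans ht.2.1) (not_lt.2 (by rwa [hx]))
    simp [crossCount, h1, h2]
  have hil : i < l := D.x_strictMono.lt_iff_lt.1
    ((le_max_left _ _).trans_lt (hpq.trans_le (min_le_right _ _)))
  have hkj : k < j := D.x_strictMono.lt_iff_lt.1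
    ((le_max_right _ _).trans_lt (hpq.trans_le (min_le_left _ _)))
  have sgn : ∀ a b c : Fin n, a < b → b < c →
      D.e a c (D.x b) ≠ 0 ∧ D'.e a c (D.x b) ≠ 0 ∧
        (0 < D'.e a c (D.x b) ↔ 0 < D.e a c (D.x b)) := by
    intro a b c hab hbc
    refine ⟨D.avoid_vertex a b c hab hbc, hx ▸ D'.avoid_vertex a b c hab hbc, ?_⟩
    rw [← sig_eq_true_iff, ← hsig a b c hab hbc, sig_eq_true_iff, hx]
  have hZ := D.properZeros hij hkl hne
  have hZ' := D'.properZeros hij hkl hne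
  rw [hx] at hZ'
  set f := fun t => D.e i j t - D.e k l t with hf
  set f' := fun t => D'.e i j t - D'.e k l t with hf'
  have hleft : f (max (D.x i) (D.x k)) ≠ 0 ∧ f' (max (D.x i) (D.x k)) ≠ 0 ∧
      (0 < f' (max (D.x i) (D.x k)) ↔ 0 < f (max (D.x i) (D.x k))) := by
    rcases lt_or_gt_of_ne hik with h | h
    · have h0 := D'.end_left k l hkl
      rw [hx] at h0
      rw [max_eq_right (D.x_strictMono h).le]
      simp only [hf, hf', h0, D.end_left k l hkl, sub_zero]
      exact sgn i k j h hkj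
    · have h0 := D'.end_left i j hij
      rw [hx] at h0
      rw [max_eq_left (D.x_strictMono h).le]
      simp only [hf, hf', h0, D.end_left i j hij, zero_sub]
      obtain ⟨h1, h2, h3⟩ := sgn k i l h hil
      refine ⟨neg_ne_zero.2 h1, neg_ne_zero.2 h2, ?_⟩
      grind
  have hright : f (min (D.x j) (D.x l)) ≠ 0 ∧ f' (min (D.x j) (D.x l)) ≠ 0 ∧
      (0 < f' (min (D.x j) (D.x l)) ↔ 0 < f (min (D.x j) (D.x l))) := by
    rcases lt_or_gt_of_ne hjl with h | h
    · have h0 := D'.end_right i j hij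
      rw [hx] at h0
      rw [min_eq_left (D.x_strictMono h).le]
      simp only [hf, hf', h0, D.end_right i j hij, zero_sub]
      obtain ⟨h1, h2, h3⟩ := sgn k j l hkj h
      refine ⟨neg_ne_zero.2 h1, neg_ne_zero.2 h2, ?_⟩
      grind
    · have h0 := D'.end_right k l hkl
      rw [hx] at h0
      rw [min_eq_right (D.x_strictMono h).le]
      simp only [hf, hf', h0, D.end_right k l hkl, sub_zero]
      exact sgn i l j hil h
  rw [crossCount, crossCount, crossSet_eq, crossSet_eq, hx,
    hZ.odd_ncard_iff hpq hleft.1 hright.1, hZ'.odd_ncard_iff hpq hleft.2.1 hright.2.1,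
    mul_neg_iff, mul_neg_iff]
  grind

end XMonotoneDrawing

/-- Piecewise affine interpolation through finitely many points. -/
theorem exists_piecewise_affine (X H : ℕ → ℝ) (N : ℕ) (hX : ∀ m < N, X m < X (m + 1)) :
    ∃ g : ℝ → ℝ, Continuous g ∧ (∀ m ≤ N, X m ≤ X N ∧ g (X m) = H m) ∧
      ∀ m < N, ∀ t ∈ Set.Icc (X m) (X (m + 1)),
        g t = H m + (H (m + 1) - H m) * ((t - X m) / (X (m + 1) - X m)) := by
  induction N with
  | zero =>
    refine ⟨fun _ => H 0, continuous_const, fun m hm => ?_, fun m hm => absurd hm (Nat.not_lt_zero m)⟩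
    obtain rfl := Nat.le_zero.1 hm
    exact ⟨le_rfl, rfl⟩
  | succ N ih =>
    obtain ⟨g, hg, hg1, hg2⟩ := ih fun m hm => hX m (hm.trans (Nat.lt_succ_self N))
    have hN := hX N (Nat.lt_succ_self N)
    have hold : ∀ t ≤ X N, g (min t (X N)) + (H (N + 1) - H N) *
        (max 0 (t - X N) / (X (N + 1) - X N)) = g t := fun t ht => by
      simp [min_eq_left ht, max_eq_left (sub_nonpos.2 ht)]
    have hnew : ∀ t ≥ X N, g (min t (X N)) + (H (N + 1) - H N) *
        (max 0 (t - X N) / (X (N + 1) - X N)) =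
        H N + (H (N + 1) - H N) * ((t - X N) / (X (N + 1) - X N)) := fun t ht => by
      rw [min_eq_right ht, max_eq_right (sub_nonneg.2 ht), (hg1 N le_rfl).2]
    refine ⟨fun t => g (min t (X N)) + (H (N + 1) - H N) *
      (max 0 (t - X N) / (X (N + 1) - X N)), by fun_prop, fun m hm => ?_, fun m hm t ht => ?_⟩
    · rcases Nat.le_succ_iff.1 hm with hm | rfl
      · exact ⟨(hg1 m hm).1.trans hN.le, (hold _ (hg1 m hm).1).trans (hg1 m hm).2⟩
      · refine ⟨le_rfl, (hnew _ hN.le).trans ?_⟩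
        rw [div_self (sub_pos.2 hN).ne']
        ring
    · rcases Nat.lt_succ_iff_lt_or_eq.1 hm with hm | rfl
      · exact (hold t (ht.2.trans (hg1 (m + 1) hm).1)).trans (hg2 m hm t ht)
      · exact hnew t ht.1

theorem exists_piecewise_affine_fin {n : ℕ} {x : Fin n → ℝ} (hx : StrictMono x) (H : Fin n → ℝ) :
    ∃ g : ℝ → ℝ, Continuous g ∧ (∀ m, g (x m) = H m) ∧
      ∀ m m' : Fin n, (m : ℕ) + 1 = m' → ∀ t ∈ Set.Icc (x m) (x m'),
        g t = H m + (H m' - H m) * ((t - x m) / (x m' - x m)) := by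
  let X : ℕ → ℝ := fun m => if h : m < n then x ⟨m, h⟩ else 0
  let G : ℕ → ℝ := fun m => if h : m < n then H ⟨m, h⟩ else 0
  have hX : ∀ m : Fin n, X m = x m := fun m => by simp [X]
  have hG : ∀ m : Fin n, G m = H m := fun m => by simp [G]
  obtain ⟨g, hg, hg1, hg2⟩ := exists_piecewise_affine X G (n - 1) fun m hm => by
    have h1 : m < n := by omega
    have h2 : m + 1 < n := by omega
    rw [hX ⟨m, h1⟩, hX ⟨m + 1, h2⟩]
    exact hx (Nat.lt_succ_self m)
  refine ⟨g, hg, fun m => ?_, fun m m' hm t ht => ?_⟩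
  · rw [← hX, ← hG]
    exact (hg1 m (by omega)).2
  · rw [← hX, ← hX, ← hm] at ht
    rw [← hX, ← hX, ← hG, ← hG, ← hm]
    exact hg2 m (by omega) t ht

theorem exists_consecutive {n : ℕ} {x : Fin n → ℝ} (hx : StrictMono x) {a b : Fin n} {t : ℝ}
    (ha : x a ≤ t) (hb : t < x b) :
    ∃ m m' : Fin n, (m : ℕ) + 1 = m' ∧ a ≤ m ∧ m' ≤ b ∧ x m ≤ t ∧ t < x m' := by
  obtain ⟨m, hm, hmax⟩ := Set.exists_max_image {m | x m ≤ t} id (Set.toFinite _) ⟨a, ha⟩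
  have hmb : m < b := hx.lt_iff_lt.1 (lt_of_le_of_lt hm hb)
  have hlt : (m : ℕ) + 1 < n := by omega
  refine ⟨m, ⟨m + 1, hlt⟩, rfl, hmax a ha, hmb, hm, ?_⟩
  by_contra hcon
  have : (⟨m + 1, hlt⟩ : Fin n) ≤ m := hmax _ (not_lt.1 hcon)
  rw [Fin.le_def] at this
  simp at this

/-- A family of piecewise affine curves with prescribed heights `V m i j` at the vertices. -/
structure AffineFamily (n : ℕ) (x : Fin n → ℝ) (V : Fin n → Fin n → Fin n → ℝ)
    (e : Fin n → Fin n → ℝ → ℝ) : Prop where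
  strictMono : StrictMono x
  at_left : ∀ i j, V i i j = 0
  at_right : ∀ i j, V j i j = 0
  ne_zero : ∀ i m j, i < m → m < j → V m i j ≠ 0
  inj : ∀ i j k l m, i < m → m < j → k < m → m < l → V m i j = V m k l → (i, j) = (k, l)
  cont : ∀ i j, Continuous (e i j)
  eval : ∀ i j m, e i j (x m) = V m i j
  affine : ∀ i j m m' : Fin n, (m : ℕ) + 1 = m' → ∀ t ∈ Set.Icc (x m) (x m'),
    e i j t = V m i j + (V m' i j - V m i j) * ((t - x m) / (x m' - x m))

namespace AffineFamily

variable {n : ℕ} {x : Fin n → ℝ} {V : Fin n → Fin n → Fin n → ℝ} {e : Fin n → Fin n → ℝ → ℝ}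

theorem common_endpoint (F : AffineFamily n x V e) {i j k l m : Fin n}
    (hne : (i, j) ≠ (k, l)) (hlt : max i k < min j l) (hm : max i k ≤ m) (hm' : m ≤ min j l)
    (h : V m i j = V m k l) : (m = i ∧ m = k) ∨ (m = j ∧ m = l) := by
  simp only [max_lt_iff, lt_min_iff, max_le_iff, le_min_iff] at hlt hm hm'
  rcases hm.1.eq_or_lt with rfl | him
  · rw [F.at_left] at h
    rcases hm.2.eq_or_lt with rfl | hkm
    · exact .inl ⟨rfl, rfl⟩
    · exact absurd h.symm (F.ne_zero _ _ _ hkm hlt.2.1)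
  rcases hm'.1.eq_or_lt with rfl | hmj
  · rw [F.at_right] at h
    rcases hm'.2.eq_or_lt with rfl | hml
    · exact .inr ⟨rfl, rfl⟩
    · exact absurd h.symm (F.ne_zero _ _ _ hlt.1.2 hml)
  rcases hm.2.eq_or_lt with rfl | hkm
  · rw [F.at_left] at h
    exact absurd h (F.ne_zero _ _ _ him hmj)
  rcases hm'.2.eq_or_lt with rfl | hml
  · rw [F.at_right] at h
    exact absurd h (F.ne_zero _ _ _ him hmj)
  exact absurd (F.inj _ _ _ _ _ him hmj hkm hml h) hne

/-- Near a common point the difference of two curves is linear with nonzero slope. -/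
theorem exists_slope (F : AffineFamily n x V e) {i j k l : Fin n}
    (hne : (i, j) ≠ (k, l)) {t : ℝ} (hp : max (x i) (x k) < t) (hq : t < min (x j) (x l))
    (h0 : e i j t = e k l t) :
    ∃ m m' : Fin n, (m : ℕ) + 1 = m' ∧ x m < t ∧ t < x m' ∧ ∃ c : ℝ, c ≠ 0 ∧
      ∀ s ∈ Set.Icc (x m) (x m'), e i j s - e k l s = c * (s - t) := by
  have hmono := F.strictMono.monotone
  rw [← hmono.map_max] at hp
  rw [← hmono.map_min] at hq
  have hlt : max i k < min j l := F.strictMono.lt_iff_lt.1 (hp.trans hq)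
  obtain ⟨m, m', hm, ham, hmb, hmt, htm⟩ := exists_consecutive F.strictMono hp.le hq
  have hmm : m < m' := by rw [Fin.lt_def]; omega
  have hL : 0 < x m' - x m := sub_pos.2 (F.strictMono hmm)
  have hmt' : x m < t := by
    refine lt_of_le_of_ne hmt fun h => ?_
    subst h
    rw [F.eval, F.eval] at h0
    have hlt' : max i k < m := F.strictMono.lt_iff_lt.1 hp
    rcases F.common_endpoint hne hlt ham (hmm.le.trans hmb) h0 with ⟨h, h'⟩ | ⟨h, h'⟩
    · rw [← h, ← h', max_self] at hlt'
      exact lt_irrefl _ hlt'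
    · rw [← h, ← h', min_self] at hmb
      exact absurd hmm (not_lt.2 hmb)
  have hdiff : ∀ s ∈ Set.Icc (x m) (x m'), e i j s - e k l s = (V m i j - V m k l) +
      ((V m' i j - V m' k l) - (V m i j - V m k l)) / (x m' - x m) * (s - x m) := by
    intro s hs
    rw [F.affine i j m m' hm s hs, F.affine k l m m' hm s hs]
    ring
  set c := ((V m' i j - V m' k l) - (V m i j - V m k l)) / (x m' - x m) with hc
  have ht := hdiff t ⟨hmt, htm.le⟩
  rw [h0, sub_self] at ht
  refine ⟨m, m', hm, hmt', htm, c, fun hc0 => ?_, fun s hs => ?_⟩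
  · have h1 : V m i j = V m k l := by
      rw [hc0] at ht; linarith
    have h2 : V m' i j = V m' k l := by
      rw [hc, div_eq_zero_iff] at hc0
      rcases hc0 with hc0 | hc0 <;> linarith
    apply hne
    have h3 := F.common_endpoint hne hlt ham (hmm.le.trans hmb) h1
    have h4 := F.common_endpoint hne hlt (ham.trans hmm.le) hmb h2
    simp only [max_le_iff, le_min_iff] at ham hmb
    rcases h3 with ⟨h3, h3'⟩ | ⟨h3, -⟩
    · rcases h4 with ⟨h4, -⟩ | ⟨h4, h4'⟩
      · exact absurd (h4.trans h3.symm) hmm.ne'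
      · rw [← h3, ← h3', ← h4, ← h4']
    · exact absurd (hmb.1.trans h3.symm.le) (not_le.2 hmm)
  · rw [hdiff s hs]
    linarith

/-- The drawing formed by an affine family. -/
def toDrawing (F : AffineFamily n x V e) : XMonotoneDrawing n where
  x := x
  x_strictMono := F.strictMono
  e := e
  cont i j _ := (F.cont i j).continuousOn
  end_left i j _ := by rw [F.eval, F.at_left]
  end_right i j _ := by rw [F.eval, F.at_right]
  avoid_vertex i m j hi hj := by rw [F.eval]; exact F.ne_zero i m j hi hj
  cross_finite i j k l _ _ hne := by
    choose m m' hm hmt htm c hc H using fun t : {t : ℝ | max (x i) (x k) < t ∧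
      t < min (x j) (x l) ∧ e i j t = e k l t} => F.exists_slope hne t.2.1 t.2.2.1 t.2.2.2
    refine Set.finite_coe_iff.1 (Finite.of_injective m fun s t hst => Subtype.ext ?_)
    have hst' : m' s = m' t := Fin.ext (by rw [← hm, ← hm, hst])
    have h := H t s ⟨hst ▸ (hmt s).le, hst' ▸ (htm s).le⟩
    rw [sub_eq_zero.2 s.2.2.2] at h
    exact sub_eq_zero.1 ((mul_eq_zero.1 h.symm).resolve_left (hc t))
  sign_change i j k l _ _ hne t hp hq h0 := by
    obtain ⟨m, m', -, hmt, htm, c, hc, H⟩ := F.exists_slope hne hp hq h0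
    have h1 := min_le_left (t - x m) (x m' - t)
    have h2 := min_le_right (t - x m) (x m' - t)
    refine ⟨min (t - x m) (x m' - t), lt_min (by linarith) (by linarith), ?_⟩
    intro s _ hs hst u _ htu hu
    rw [H s ⟨by linarith, by linarith⟩, H u ⟨by linarith, by linarith⟩]
    have h3 : 0 < c * c := mul_self_pos.2 hc
    have h4 : (s - t) * (u - t) < 0 := mul_neg_of_neg_of_pos (by linarith) (by linarith)
    nlinarith [mul_neg_of_pos_of_neg h3 h4]

/-- Curves that are comparable at all vertices of their common range do not cross. -/
theorem lt_of_heights (F : AffineFamily n x V e) {i j k l a b : Fin n}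
    (hle : ∀ m, a ≤ m → m ≤ b → V m i j ≤ V m k l)
    (hlt : (∀ m, a < m → m ≤ b → V m i j < V m k l) ∨ (∀ m, a ≤ m → m < b → V m i j < V m k l))
    {t : ℝ} (ha : x a < t) (hb : t < x b) : e i j t < e k l t := by
  obtain ⟨m, m', hm, ham, hmb, hmt, htm⟩ := exists_consecutive F.strictMono ha.le hb
  have hmm : m < m' := by rw [Fin.lt_def]; omega
  have hL : 0 < x m' - x m := sub_pos.2 (F.strictMono hmm)
  rw [F.affine i j m m' hm t ⟨hmt, htm.le⟩, F.affine k l m m' hm t ⟨hmt, htm.le⟩]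
  set τ := (t - x m) / (x m' - x m) with hτ
  have h0 : 0 ≤ τ := div_nonneg (sub_nonneg.2 hmt) hL.le
  have h1 : τ < 1 := (div_lt_one hL).2 (by linarith)
  have d0 := hle m ham (hmm.le.trans hmb)
  have d1 := hle m' (ham.trans hmm.le) hmb
  have key : V m i j < V m k l ∨ (V m' i j < V m' k l ∧ 0 < τ) := by
    rcases hlt with hlt | hlt
    · rcases ham.eq_or_lt with rfl | h
      · exact .inr ⟨hlt m' hmm hmb, div_pos (sub_pos.2 ha) hL⟩
      · exact .inl (hlt m h (hmm.le.trans hmb))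
    · exact .inl (hlt m ham (hmm.trans_le hmb))
  rcases key with h | ⟨h, hpos⟩
  · nlinarith [mul_pos (sub_pos.2 h) (sub_pos.2 h1), mul_nonneg (sub_nonneg.2 d1) h0]
  · nlinarith [mul_nonneg (sub_nonneg.2 d0) (sub_pos.2 h1).le, mul_pos (sub_pos.2 h) hpos]

end AffineFamily

/-- Every locally transitive signature is realized by a semisimple drawing with prescribed vertex
coordinates. -/
theorem Sig.LocallyTransitive.exists_semisimple {n : ℕ} {σ : Fin n → Fin n → Fin n → Bool}
    (hσ : LocallyTransitive σ) {x : Fin n → ℝ} (hx : StrictMono x) :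
    ∃ D : XMonotoneDrawing n, D.Semisimple ∧ D.x = x ∧ D.Realizes σ := by
  choose W hpos hneg hinj hrow hcol using hσ.exists_heights
  let V : Fin n → Fin n → Fin n → ℝ := fun m i j => if i < m ∧ m < j then W m i j else 0
  have hV : ∀ {m i j}, i < m → m < j → V m i j = W m i j := fun h h' => if_pos ⟨h, h'⟩
  have hleft : ∀ i j, V i i j = 0 := fun i j => if_neg fun h => lt_irrefl _ h.1
  have hright : ∀ i j, V j i j = 0 := fun i j => if_neg fun h => lt_irrefl _ h.2
  choose e hcont heval haff using fun i j => exists_piecewise_affine_fin hx fun m => V m i j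
  have F : AffineFamily n x V e :=
    { strictMono := hx
      at_left := hleft
      at_right := hright
      ne_zero := fun i m j hi hj => by
        rw [hV hi hj]
        cases h : σ i m j
        · exact (hneg m i j h).ne
        · exact (hpos m i j h).ne'
      inj := fun i j k l m hi hj hk hl h => by
        rw [hV hi hj, hV hk hl] at h
        exact hinj m i j k l h
      cont := hcont
      eval := heval
      affine := haff }
  have rowlt : ∀ {i j l : Fin n} {t : ℝ}, Sig.Below σ i j l → x i < t →
      t < min (x j) (x l) → e i j t < e i l t := by
    intro i j l t h hp hq
    rw [← hx.monotone.map_min] at hq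
    have key : ∀ m, i < m → m ≤ min j l → V m i j < V m i l := by
      intro m him hm
      obtain ⟨hmj, hml⟩ := le_min_iff.1 hm
      rcases hmj.eq_or_lt with rfl | hmj
      · have hml := lt_of_le_of_ne hml h.ne
        rw [hright, hV him hml]
        exact hpos _ _ _ ((Sig.below_iff_of_lt hml).1 h)
      rcases hml.eq_or_lt with rfl | hml
      · rw [hright, hV him hmj]
        exact hneg _ _ _ ((Sig.below_iff_of_gt hmj).1 h)
      rw [hV him hmj, hV him hml]
      exact hrow m i j l him hmj hml h
    refine F.lt_of_heights (fun m him hm => ?_) (.inl key) hp hq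
    rcases him.eq_or_lt with rfl | him
    · rw [hleft, hleft]
    · exact (key m him hm).le
  have collt : ∀ {i k j : Fin n} {t : ℝ}, Sig.Lower σ j i k →
      max (x i) (x k) < t → t < x j → e i j t < e k j t := by
    intro i k j t h hp hq
    rw [← hx.monotone.map_max] at hp
    have key : ∀ m, max i k ≤ m → m < j → V m i j < V m k j := by
      intro m hm hmj
      obtain ⟨him, hkm⟩ := max_le_iff.1 hm
      rcases him.eq_or_lt with rfl | him
      · have hkm := lt_of_le_of_ne hkm h.ne.symm
        rw [hleft, hV hkm hmj]
        exact hpos _ _ _ ((Sig.lower_iff_of_gt hkm).1 h)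
      rcases hkm.eq_or_lt with rfl | hkm
      · rw [hleft, hV him hmj]
        exact hneg _ _ _ ((Sig.lower_iff_of_lt him).1 h)
      rw [hV him hmj, hV hkm hmj]
      exact hcol m i k j him hkm hmj h
    refine F.lt_of_heights (fun m hm hmj => ?_) (.inr key) hp hq
    rcases hmj.eq_or_lt with rfl | hmj
    · rw [hright, hright]
    · exact (key m hm hmj).le
  refine ⟨F.toDrawing, fun i j k l hij hkl hne hadj => ?_, rfl, fun i j k hij hjk => ?_⟩
  · have hempty : F.toDrawing.crossSet i j k l = ∅ := by
      refine Set.eq_empty_of_forall_notMem fun t ht => ?_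
      obtain ⟨hp, hq, h0⟩ : max (x i) (x k) < t ∧ t < min (x j) (x l) ∧ e i j t = e k l t := ht
      rcases hadj with rfl | rfl | rfl | rfl
      · rw [max_self] at hp
        rcases Sig.below_or_below (σ := σ) i (j := j) (k := l) (by simpa using hne) with h | h
        · exact (rowlt h hp hq).ne h0
        · exact (rowlt h hp (min_comm (x j) (x l) ▸ hq)).ne' h0
      · exact lt_irrefl _ ((max_lt_iff.1 hp).1.trans (lt_min_iff.1 hq).2)
      · exact lt_irrefl _ ((max_lt_iff.1 hp).2.trans (lt_min_iff.1 hq).1)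
      · rw [min_self] at hq
        rcases Sig.lower_or_lower (σ := σ) j (j := i) (k := k) (by simpa using hne) with h | h
        · exact (collt h hp hq).ne h0
        · exact (collt h (max_comm (x i) (x k) ▸ hp) hq).ne' h0
    rw [XMonotoneDrawing.crossCount, hempty, Set.ncard_empty]
  · have heq : F.toDrawing.e i k (F.toDrawing.x j) = W j i k :=
      (heval i k j).trans (hV hij hjk)
    cases h : σ i j k
    · rw [XMonotoneDrawing.sig_eq_false_iff _ hij hjk, heq]
      exact hneg j i k h
    · rw [XMonotoneDrawing.sig_eq_true_iff, heq]
      exact hpos j i k h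

/-- Every weakly semisimple x-monotone drawing `D` of `K n` can be
replaced by a semisimple x-monotone drawing `D'` with the same vertex coordinates, the
same signature function (above/below relations of vertices and edges), the same parity
of the number of crossings for every pair of edges, and the same rotation system (the
vertical orders of edges in small punctured neighborhoods to the right and to the left
of each vertex agree). -/
theorem weakly_semisimple_to_semisimple_monotone (n : ℕ) (D : XMonotoneDrawing n)
    (hD : D.WeaklySemisimple) :
    ∃ D' : XMonotoneDrawing n, D'.Semisimple ∧ D'.x = D.x ∧
      (∀ i j k : Fin n, i < j → j < k → D'.sig i j k = D.sig i j k) ∧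
      (∀ i j k l : Fin n, i < j → k < l → (i, j) ≠ (k, l) →
        (Odd (D'.crossCount i j k l) ↔ Odd (D.crossCount i j k l))) ∧
      (∀ i j j' : Fin n, i < j → i < j' → j ≠ j' →
        ∃ ε > (0 : ℝ), ∀ t ∈ Set.Ioo (D.x i) (D.x i + ε),
          (D.e i j t < D.e i j' t ↔ D'.e i j t < D'.e i j' t)) ∧
      (∀ a a' i : Fin n, a < i → a' < i → a ≠ a' →
        ∃ ε > (0 : ℝ), ∀ t ∈ Set.Ioo (D.x i - ε) (D.x i),
          (D.e a i t < D.e a' i t ↔ D'.e a i t < D'.e a' i t)) := by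
  obtain ⟨D', hss, hx, hsig⟩ := hD.locallyTransitive.exists_semisimple D.x_strictMono
  have hD' := hss.weaklySemisimple
  refine ⟨D', hss, hx, hsig, fun i j k l hij hkl hne => ?_, fun i j j' hij hij' hne => ?_,
    fun a a' i hai hai' hne => ?_⟩
  · by_cases hadj : XMonotoneDrawing.Adj i j k l
    · exact iff_of_false (Nat.not_odd_iff_even.2 (hD' i j k l hij hkl hne hadj))
        (Nat.not_odd_iff_even.2 (hD i j k l hij hkl hne hadj))
    · exact XMonotoneDrawing.odd_crossCount_iff_of_sig_eq hx hsig hij hkl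
        (fun h => hadj (.inl h)) (fun h => hadj (.inr (.inr (.inr h))))
  · obtain ⟨ε, hε, H⟩ := hD.lt_near_left_iff hij hij' hne
    obtain ⟨ε', hε', H'⟩ := hD'.lt_near_left_iff hij hij' hne
    rw [hx] at H'
    refine ⟨min ε ε', lt_min hε hε', fun t ht => ?_⟩
    have h1 := ht.2.trans_le (add_le_add_right (min_le_left ε ε') (D.x i))
    have h2 := ht.2.trans_le (add_le_add_right (min_le_right ε ε') (D.x i))
    rw [H t ⟨ht.1, h1⟩, H' t ⟨ht.1, h2⟩]
    rcases lt_or_gt_of_ne hne with h | h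
    · rw [Sig.below_iff_of_lt h, Sig.below_iff_of_lt h, hsig i j j' hij h]
    · rw [Sig.below_iff_of_gt h, Sig.below_iff_of_gt h, hsig i j' j hij' h]
  · obtain ⟨ε, hε, H⟩ := hD.lt_near_right_iff hai hai' hne
    obtain ⟨ε', hε', H'⟩ := hD'.lt_near_right_iff hai hai' hne
    rw [hx] at H'
    refine ⟨min ε ε', lt_min hε hε', fun t ht => ?_⟩
    have h1 := (sub_le_sub_left (min_le_left ε ε') (D.x i)).trans_lt ht.1
    have h2 := (sub_le_sub_left (min_le_right ε ε') (D.x i)).trans_lt ht.1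
    rw [H t ⟨h1, ht.2⟩, H' t ⟨h2, ht.2⟩]
    rcases lt_or_gt_of_ne hne with h | h
    · rw [Sig.lower_iff_of_lt h, Sig.lower_iff_of_lt h, hsig a a' i h hai']
    · rw [Sig.lower_iff_of_gt h, Sig.lower_iff_of_gt h, hsig a' a i h hai]
end

section
/- A signature function σ on the triples of [n] can be realized as the signature function of a simple x-monotone drawing of K_n if and only if σ is admissible and, in addition, there is no 5-tuple a < b < c < d < e with σ(a,b,e) = σ(a,d,e) = σ(b,c,d) equal to the opposite sign of σ(a,c,e). -/
/-! ### Signatures of simple drawings -/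

theorem Sig.allowedForm_iff (a b c d : Bool) :
    Sig.AllowedForm a b c d ↔ (b ≠ c → a = b ∧ d = c) := by
  cases a <;> cases b <;> cases c <;> cases d <;> simp [Sig.AllowedForm]

namespace XMonotoneDrawing

variable {n : ℕ}

/-- Two edges whose vertical order differs at two parameters cross in between. -/
theorem exists_mem_crossSet (D : XMonotoneDrawing n) {i j k l : Fin n} (hij : i < j) (hkl : k < l)
    {s u : ℝ} (hsu : s < u) (his : D.x i ≤ s) (hks : D.x k ≤ s) (huj : u ≤ D.x j)
    (hul : u ≤ D.x l) (h : (D.e i j s - D.e k l s) * (D.e i j u - D.e k l u) < 0) :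
    ∃ t ∈ D.crossSet i j k l, s < t ∧ t < u := by
  have hc : ContinuousOn (fun t => D.e i j t - D.e k l t) (Set.Icc s u) :=
    ((D.cont i j hij).mono (Set.Icc_subset_Icc his huj)).sub
      ((D.cont k l hkl).mono (Set.Icc_subset_Icc hks hul))
  obtain ⟨t, ⟨hst, htu⟩, ht⟩ : ∃ t ∈ Set.Ioo s u, D.e i j t - D.e k l t = 0 := by
    rcases mul_neg_iff.mp h with ⟨h1, h2⟩ | ⟨h1, h2⟩
    · exact intermediate_value_Ioo' hsu.le hc ⟨h2, h1⟩
    · exact intermediate_value_Ioo hsu.le hc ⟨h1, h2⟩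
  exact ⟨t, ⟨max_lt (his.trans_lt hst) (hks.trans_lt hst),
    lt_min (htu.trans_le huj) (htu.trans_le hul), sub_eq_zero.mp ht⟩, hst, htu⟩

theorem Simple.not_change_of_adj {D : XMonotoneDrawing n} (hD : D.Simple) {i j k l : Fin n}
    (hij : i < j) (hkl : k < l) (hne : (i, j) ≠ (k, l)) (hadj : Adj i j k l)
    {s u : ℝ} (hsu : s < u) (his : D.x i ≤ s) (hks : D.x k ≤ s) (huj : u ≤ D.x j)
    (hul : u ≤ D.x l) : ¬ (D.e i j s - D.e k l s) * (D.e i j u - D.e k l u) < 0 := by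
  intro h
  obtain ⟨t, ht, -⟩ := D.exists_mem_crossSet hij hkl hsu his hks huj hul h
  have hempty := (Set.ncard_eq_zero (D.cross_finite i j k l hij hkl hne)).mp
    ((hD i j k l hij hkl hne).1 hadj)
  have ht' : t ∈ (∅ : Set ℝ) := hempty ▸ ht
  exact ht'

theorem Simple.not_change_twice {D : XMonotoneDrawing n} (hD : D.Simple) {i j k l : Fin n}
    (hij : i < j) (hkl : k < l) (hne : (i, j) ≠ (k, l)) (hadj : ¬ Adj i j k l)
    {s u w : ℝ} (hsu : s < u) (huw : u < w) (his : D.x i ≤ s) (hks : D.x k ≤ s)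
    (hwj : w ≤ D.x j) (hwl : w ≤ D.x l)
    (h₁ : (D.e i j s - D.e k l s) * (D.e i j u - D.e k l u) < 0) :
    ¬ (D.e i j u - D.e k l u) * (D.e i j w - D.e k l w) < 0 := by
  intro h₂
  obtain ⟨t₁, ht₁, -, h₁u⟩ := D.exists_mem_crossSet hij hkl hsu his hks
    (huw.le.trans hwj) (huw.le.trans hwl) h₁
  obtain ⟨t₂, ht₂, hu₂, -⟩ := D.exists_mem_crossSet hij hkl huw (his.trans hsu.le)
    (hks.trans hsu.le) hwj hwl h₂
  have heq := (Set.ncard_le_one (D.cross_finite i j k l hij hkl hne)).mp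
    ((hD i j k l hij hkl hne).2 hadj) t₁ ht₁ t₂ ht₂
  linarith

theorem e_pos_of_sig (D : XMonotoneDrawing n) {i j k : Fin n} (h : D.sig i j k = true) :
    0 < D.e i k (D.x j) := by
  simpa [sig] using h

theorem e_neg_of_sig (D : XMonotoneDrawing n) {i j k : Fin n} (hij : i < j) (hjk : j < k)
    (h : D.sig i j k = false) : D.e i k (D.x j) < 0 := by
  have h' : D.e i k (D.x j) ≤ 0 := by simpa [sig] using h
  exact lt_of_le_of_ne h' (D.avoid_vertex i j k hij hjk)

theorem e_mul_e_neg_of_sig_ne (D : XMonotoneDrawing n) {i j k i' j' k' : Fin n} (hij : i < j)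
    (hjk : j < k) (hij' : i' < j') (hjk' : j' < k') (h : D.sig i j k ≠ D.sig i' j' k') :
    D.e i k (D.x j) * D.e i' k' (D.x j') < 0 := by
  cases h₁ : D.sig i j k <;> cases h₂ : D.sig i' j' k'
  · simp [h₁, h₂] at h
  · exact mul_neg_of_neg_of_pos (D.e_neg_of_sig hij hjk h₁) (D.e_pos_of_sig h₂)
  · exact mul_neg_of_pos_of_neg (D.e_pos_of_sig h₁) (D.e_neg_of_sig hij' hjk' h₂)
  · simp [h₁, h₂] at h

/-- If `u` and `v` have opposite signs, and so do `v` and `w`, then `u` and `v - w` have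
opposite signs. -/
theorem mul_sub_neg_of_alternating {u v w : ℝ} (h₁ : u * v < 0) (h₂ : v * w < 0) :
    u * (v - w) < 0 := by
  rcases mul_neg_iff.mp h₁ with ⟨hu, hv⟩ | ⟨hu, hv⟩
  · have hw : 0 < w := by nlinarith
    exact mul_neg_of_pos_of_neg hu (by linarith)
  · have hw : w < 0 := by nlinarith
    exact mul_neg_of_neg_of_pos hu (by linarith)

theorem Simple.admissible_sig {D : XMonotoneDrawing n} (hD : D.Simple) :
    Sig.Admissible D.sig := by
  intro a b c d hab hbc hcd
  have xbc := D.x_strictMono hbc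
  have xab := D.x_strictMono hab
  have xcd := D.x_strictMono hcd
  rw [Sig.allowedForm_iff]
  intro hne
  have hbc' := D.e_mul_e_neg_of_sig_ne hab (hbc.trans hcd) (hab.trans hbc) hcd hne
  constructor
  · by_contra h
    have h1 := D.e_mul_e_neg_of_sig_ne hab hbc hab (hbc.trans hcd) h
    refine hD.not_change_of_adj (hab.trans (hbc.trans hcd)) (hab.trans hbc)
      (by simp [hcd.ne']) (Or.inl rfl) xbc xab.le xab.le xcd.le le_rfl ?_
    rw [D.end_right a c (hab.trans hbc), sub_zero, mul_comm]
    exact mul_sub_neg_of_alternating (by linarith) (by linarith)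
  · by_contra h
    have h1 := D.e_mul_e_neg_of_sig_ne hbc hcd (hab.trans hbc) hcd h
    refine hD.not_change_of_adj (hab.trans (hbc.trans hcd)) (hbc.trans hcd)
      (by simp [hab.ne]) (Or.inr (Or.inr (Or.inr rfl))) xbc xab.le le_rfl xcd.le xcd.le ?_
    rw [D.end_left b d (hbc.trans hcd), sub_zero]
    exact mul_sub_neg_of_alternating hbc' (by linarith)

theorem Simple.sig_middle_eq {D : XMonotoneDrawing n} (hD : D.Simple) {a b c d e : Fin n}
    (hab : a < b) (hbc : b < c) (hcd : c < d) (hde : d < e)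
    (h₁ : D.sig a b e ≠ D.sig a c e) (h₂ : D.sig a c e ≠ D.sig a d e) :
    D.sig b c d = D.sig a c e := by
  by_contra h
  have hac := hab.trans hbc
  have hce := hcd.trans hde
  have k₁ := D.e_mul_e_neg_of_sig_ne hab (hbc.trans hce) hac hce h₁
  have k₂ := D.e_mul_e_neg_of_sig_ne hac hce (hac.trans hcd) hde h₂
  have k₃ := D.e_mul_e_neg_of_sig_ne hbc hcd hac hce h
  refine hD.not_change_twice (hac.trans hce) (hbc.trans hcd) (by simp [hab.ne]) ?_
    (D.x_strictMono hbc) (D.x_strictMono hcd) (D.x_strictMono hab).le le_rfl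
    (D.x_strictMono hde).le le_rfl ?_ ?_
  · rintro (h | h | h | h)
    · exact hab.ne h
    · exact (hac.trans hcd).ne h
    · exact (hbc.trans hce).ne' h
    · exact hde.ne' h
  · rw [D.end_left b d (hbc.trans hcd), sub_zero]
    exact mul_sub_neg_of_alternating k₁ (by linarith)
  · rw [D.end_right b d (hbc.trans hcd), sub_zero, mul_comm]
    exact mul_sub_neg_of_alternating (by linarith) (by linarith)

end XMonotoneDrawing

/-! ### The drawing of a signature function

At each vertex the edges passing above it are separated from those passing below it, and
otherwise the vertical order of the edges is the one at the previous vertex. -/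

namespace Sig

/-- The four-point condition of admissibility for signatures indexed by natural numbers. -/
def FourPoint (τ : ℕ → ℕ → ℕ → Bool) (n : ℕ) : Prop :=
  ∀ ⦃a b c d : ℕ⦄, a < b → b < c → c < d → d < n → τ a b d ≠ τ a c d →
    τ a b c = τ a b d ∧ τ b c d = τ a c d

/-- The absence of forbidden 5-tuples for signatures indexed by natural numbers. -/
def FivePoint (τ : ℕ → ℕ → ℕ → Bool) (n : ℕ) : Prop :=
  ∀ ⦃a b c d e : ℕ⦄, a < b → b < c → c < d → d < e → e < n → τ a b e ≠ τ a c e →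
    τ a c e ≠ τ a d e → τ b c d = τ a c e

variable {τ : ℕ → ℕ → ℕ → Bool} {n : ℕ}

/-- If, along the edge `{k, l}`, the sign at `q` differs from the signs at `p` and `r`, where
endpoints of the edge count as having any sign, then it is the sign of `p, q, r`. -/
theorem sign_of_alternating (h4 : FourPoint τ n) (h5 : FivePoint τ n) {k l p q r : ℕ}
    (hkp : k ≤ p) (hpq : p < q) (hqr : q < r) (hrl : r ≤ l) (hl : l < n)
    (hp : p = k ∨ τ k p l ≠ τ k q l) (hr : r = l ∨ τ k r l ≠ τ k q l) :
    τ p q r = τ k q l := by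
  rcases eq_or_lt_of_le hkp with rfl | hkp
  · rcases eq_or_lt_of_le hrl with rfl | hrl
    · rfl
    · exact (h4 hpq hqr hrl hl (hr.resolve_left hrl.ne).symm).1
  · have hp' := hp.resolve_left hkp.ne'
    rcases eq_or_lt_of_le hrl with rfl | hrl
    · exact (h4 hkp hpq hqr hl hp').2
    · exact h5 hkp hpq hqr hrl hl hp' (hr.resolve_left hrl.ne).symm

/-- The edge `{i, k}` leaves the vertex `i` below the edge `{i, j}`. -/
def StartsBelow (τ : ℕ → ℕ → ℕ → Bool) (i k j : ℕ) : Prop :=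
  (k < j ∧ τ i k j = true) ∨ (j < k ∧ τ i j k = false)

instance (i k j : ℕ) : Decidable (StartsBelow τ i k j) := by
  unfold StartsBelow; infer_instance

theorem StartsBelow.trans (h4 : FourPoint τ n) {i k j l : ℕ} (hk : i < k) (hj : i < j)
    (hl : i < l) (hkn : k < n) (hjn : j < n) (hln : l < n) (h₁ : StartsBelow τ i k j)
    (h₂ : StartsBelow τ i j l) : StartsBelow τ i k l := by
  have H : ∀ {b c d : ℕ}, i < b → b < c → c < d → d < n → τ i b d ≠ τ i c d →
      τ i b c = τ i b d := fun hb hc hd hn h => (h4 hb hc hd hn h).1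
  unfold StartsBelow at *
  rcases lt_trichotomy k l with hkl | rfl | hkl
  · refine Or.inl ⟨hkl, ?_⟩
    rcases h₁ with ⟨a, b⟩ | ⟨a, b⟩ <;> rcases h₂ with ⟨c, d⟩ | ⟨c, d⟩
    · have := H hk a c hln; grind
    · have := H hk hkl c hjn; grind
    · have := H hj a hkl hln; grind
    · omega
  · rcases h₁ with ⟨a, b⟩ | ⟨a, b⟩ <;> rcases h₂ with ⟨c, d⟩ | ⟨c, d⟩ <;>
      first | omega | simp_all
  · refine Or.inr ⟨hkl, ?_⟩
    rcases h₁ with ⟨a, b⟩ | ⟨a, b⟩ <;> rcases h₂ with ⟨c, d⟩ | ⟨c, d⟩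
    · omega
    · have := H hl hkl a hjn; grind
    · have := H hj c hkl hkn; grind
    · have := H hl c a hkn; grind

theorem not_startsBelow_self (i j : ℕ) : ¬ StartsBelow τ i j j := by
  simp [StartsBelow]

theorem startsBelow_total {i j k : ℕ} (h : j ≠ k) : StartsBelow τ i j k ∨ StartsBelow τ i k j := by
  unfold StartsBelow
  rcases lt_or_gt_of_ne h with h | h
  · cases hτ : τ i j k <;> simp [h]
  · cases hτ : τ i k j <;> simp [h]

/-- The height, in `[0, 1)`, at which the edge `{i, j}` leaves the vertex `i`. -/
noncomputable def startHeight (τ : ℕ → ℕ → ℕ → Bool) (n i j : ℕ) : ℝ :=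
  ((Finset.range n).filter fun k => i < k ∧ StartsBelow τ i k j).card / ((n : ℝ) + 1)

theorem startHeight_nonneg (i j : ℕ) : 0 ≤ startHeight τ n i j := by
  unfold startHeight; positivity

theorem startHeight_lt_one (i j : ℕ) : startHeight τ n i j < 1 := by
  unfold startHeight
  rw [div_lt_one (by positivity)]
  have h : ((Finset.range n).filter fun k => i < k ∧ StartsBelow τ i k j).card ≤ n := by
    simpa using Finset.card_filter_le (Finset.range n) fun k => i < k ∧ StartsBelow τ i k j
  have h' : (((Finset.range n).filter fun k => i < k ∧ StartsBelow τ i k j).card : ℝ) ≤ n := by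
    exact_mod_cast h
  linarith

theorem startHeight_lt (h4 : FourPoint τ n) {i j l : ℕ} (hj : i < j) (hl : i < l) (hjn : j < n)
    (hln : l < n) (h : StartsBelow τ i j l) : startHeight τ n i j < startHeight τ n i l := by
  unfold startHeight
  have hcard : ((Finset.range n).filter fun k => i < k ∧ StartsBelow τ i k j).card <
      ((Finset.range n).filter fun k => i < k ∧ StartsBelow τ i k l).card := by
    apply Finset.card_lt_card
    rw [Finset.ssubset_iff_of_subset]
    · exact ⟨j, by simp [hj, hjn, h], by simp [not_startsBelow_self]⟩
    · intro k hk
      simp only [Finset.mem_filter, Finset.mem_range] at hk ⊢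
      exact ⟨hk.1, hk.2.1, hk.2.2.trans h4 hk.2.1 hj hl hk.1 hjn hln h⟩
  have : (0 : ℝ) < n + 1 := by positivity
  gcongr

theorem startHeight_ne (h4 : FourPoint τ n) {i j l : ℕ} (hj : i < j) (hl : i < l) (hjn : j < n)
    (hln : l < n) (h : j ≠ l) : startHeight τ n i j ≠ startHeight τ n i l := by
  rcases startsBelow_total (τ := τ) (i := i) h with h | h
  · exact (startHeight_lt h4 hj hl hjn hln h).ne
  · exact (startHeight_lt h4 hl hj hln hjn h).ne'

/-- The side of the vertex `m` on which the edge `{i, j}` passes: `1` above, `-1` below, and `0`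
when `m` is not strictly between `i` and `j`. -/
def side (τ : ℕ → ℕ → ℕ → Bool) (i j m : ℕ) : ℤ :=
  if i < m ∧ m < j then (if τ i m j then 1 else -1) else 0

theorem side_le_one (i j m : ℕ) : side τ i j m ≤ 1 := by
  unfold side; split_ifs <;> simp

theorem neg_one_le_side (i j m : ℕ) : -1 ≤ side τ i j m := by
  unfold side; split_ifs <;> simp

/-- The height of the edge `{i, j}` just to the right of the vertex `m`. -/
noncomputable def height (τ : ℕ → ℕ → ℕ → Bool) (n i j : ℕ) : ℕ → ℝ
  | 0 => startHeight τ n i j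
  | m + 1 => if i < m + 1 then 2 * side τ i j (m + 1) + height τ n i j m / 3
      else startHeight τ n i j

theorem height_self (i j : ℕ) : height τ n i j i = startHeight τ n i j := by
  cases i <;> simp [height]

theorem height_succ {i m : ℕ} (j : ℕ) (h : i ≤ m) :
    height τ n i j (m + 1) = 2 * side τ i j (m + 1) + height τ n i j m / 3 := by
  simp [height, Nat.lt_succ_of_le h]

theorem abs_height_lt (i j m : ℕ) : |height τ n i j m| < 3 := by
  have h0 := startHeight_nonneg (τ := τ) (n := n) i j
  have h1 := startHeight_lt_one (τ := τ) (n := n) i j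
  induction m with
  | zero => rw [abs_lt]; constructor <;> simp only [height] <;> linarith
  | succ m ih =>
    have hs : (side τ i j (m + 1) : ℝ) ≤ 1 := by exact_mod_cast side_le_one i j (m + 1)
    have hs' : (-1 : ℝ) ≤ side τ i j (m + 1) := by exact_mod_cast neg_one_le_side i j (m + 1)
    rw [abs_lt] at ih ⊢
    simp only [height]
    split_ifs <;> constructor <;> linarith

theorem one_lt_height {i j m : ℕ} (him : i < m) (hmj : m < j) (h : τ i m j = true) :
    1 < height τ n i j m := by
  obtain ⟨m, rfl⟩ : ∃ p, m = p + 1 := ⟨m - 1, by omega⟩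
  have := abs_lt.mp (abs_height_lt (τ := τ) (n := n) i j m)
  rw [height_succ j (by omega)]
  simp only [side, him, hmj, h, and_self, if_true]
  push_cast
  linarith

theorem height_lt_neg_one {i j m : ℕ} (him : i < m) (hmj : m < j) (h : τ i m j = false) :
    height τ n i j m < -1 := by
  obtain ⟨m, rfl⟩ : ∃ p, m = p + 1 := ⟨m - 1, by omega⟩
  have := abs_lt.mp (abs_height_lt (τ := τ) (n := n) i j m)
  rw [height_succ j (by omega)]
  simp only [side, him, hmj, h, and_self, if_true]
  norm_num
  linarith

theorem height_lt_of_side_lt {i j k l m : ℕ} (him : i < m) (hkm : k < m)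
    (h : side τ k l m < side τ i j m) : height τ n k l m < height τ n i j m := by
  obtain ⟨m, rfl⟩ : ∃ p, m = p + 1 := ⟨m - 1, by omega⟩
  have h1 := abs_lt.mp (abs_height_lt (τ := τ) (n := n) i j m)
  have h2 := abs_lt.mp (abs_height_lt (τ := τ) (n := n) k l m)
  have h' : (side τ k l (m + 1) : ℝ) + 1 ≤ side τ i j (m + 1) := by exact_mod_cast h
  rw [height_succ j (by omega), height_succ l (by omega)]
  linarith

/-- The height of the edge `{i, j}` at the vertex `m`. -/
noncomputable def vertexHeight (τ : ℕ → ℕ → ℕ → Bool) (n i j m : ℕ) : ℝ :=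
  if i < m ∧ m < j then height τ n i j m else 0

theorem vertexHeight_left (i j : ℕ) : vertexHeight τ n i j i = 0 := by
  simp [vertexHeight]

theorem vertexHeight_right (i j : ℕ) : vertexHeight τ n i j j = 0 := by
  simp [vertexHeight]

theorem vertexHeight_eq_height {i j m : ℕ} (him : i < m) (hmj : m < j) :
    vertexHeight τ n i j m = height τ n i j m := by
  simp [vertexHeight, him, hmj]

theorem one_lt_vertexHeight {i j m : ℕ} (him : i < m) (hmj : m < j) (h : τ i m j = true) :
    1 < vertexHeight τ n i j m :=
  vertexHeight_eq_height (τ := τ) (n := n) him hmj ▸ one_lt_height him hmj h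

theorem vertexHeight_lt_neg_one {i j m : ℕ} (him : i < m) (hmj : m < j) (h : τ i m j = false) :
    vertexHeight τ n i j m < -1 :=
  vertexHeight_eq_height (τ := τ) (n := n) him hmj ▸ height_lt_neg_one him hmj h

theorem vertexHeight_lt_of_side_lt {i j k l m : ℕ} (h : side τ k l m < side τ i j m) :
    vertexHeight τ n k l m < vertexHeight τ n i j m := by
  by_cases hA : i < m ∧ m < j <;> by_cases hB : k < m ∧ m < l
  · rw [vertexHeight_eq_height hA.1 hA.2, vertexHeight_eq_height hB.1 hB.2]
    exact height_lt_of_side_lt hA.1 hB.1 h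
  · cases hτ : τ i m j
    · simp [side, hA, hB, hτ] at h
    · have := one_lt_vertexHeight (n := n) hA.1 hA.2 hτ
      rw [vertexHeight, if_neg hB]
      linarith
  · cases hτ : τ k m l
    · have := vertexHeight_lt_neg_one (n := n) hB.1 hB.2 hτ
      rw [vertexHeight.eq_def _ _ i, if_neg hA]
      linarith
    · simp [side, hA, hB, hτ] at h
  · simp [side, hA, hB] at h

theorem interior_iff_of_side_eq {i j k l m : ℕ} (h : side τ k l m = side τ i j m) :
    (i < m ∧ m < j) ↔ (k < m ∧ m < l) := by
  unfold side at h
  constructor <;> intro h₁ <;> by_contra h₂ <;> simp [h₁, h₂] at h <;> split_ifs at h <;>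
    simp at h

/-- To the right of a vertex which is not the left endpoint of both edges, the order of the edges
is the one at the vertex. -/
theorem vertexHeight_lt_of_height_lt {i j k l m : ℕ} (hik : i ≠ k) (him : i ≤ m) (hkm : k ≤ m)
    (hmj : m < j) (hml : m < l) (h : height τ n k l m < height τ n i j m) :
    vertexHeight τ n k l m < vertexHeight τ n i j m := by
  rcases eq_or_lt_of_le him with rfl | him
  · have hk : k < i := by omega
    have h1 := startHeight_lt_one (τ := τ) (n := n) i j
    rw [height_self] at h
    rw [vertexHeight_left]
    cases hτ : τ k i l
    · linarith [vertexHeight_lt_neg_one (n := n) hk hml hτ]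
    · linarith [one_lt_height (n := n) hk hml hτ]
  rcases eq_or_lt_of_le hkm with rfl | hkm
  · have h1 := startHeight_nonneg (τ := τ) (n := n) k l
    rw [height_self] at h
    rw [vertexHeight_left]
    cases hτ : τ i k j
    · linarith [height_lt_neg_one (n := n) him hmj hτ]
    · linarith [one_lt_vertexHeight (n := n) him hmj hτ]
  rwa [vertexHeight_eq_height him hmj, vertexHeight_eq_height hkm hml]

theorem exists_side_lt {i j k l a b : ℕ} (hik : i ≠ k) (hia : i ≤ a) (hka : k ≤ a) (hab : a < b)
    (hbj : b ≤ j) (hbl : b ≤ l) (ha : vertexHeight τ n i j a ≤ vertexHeight τ n k l a)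
    (hb : vertexHeight τ n k l b < vertexHeight τ n i j b) :
    ∃ q, a < q ∧ q ≤ b ∧ side τ k l q < side τ i j q := by
  induction b with
  | zero => omega
  | succ m ih =>
    rcases lt_trichotomy (side τ k l (m + 1)) (side τ i j (m + 1)) with h | h | h
    · exact ⟨m + 1, hab, le_rfl, h⟩
    · have hint := interior_iff_of_side_eq h
      by_cases hA : i < m + 1 ∧ m + 1 < j
      · have hB := hint.mp hA
        rw [vertexHeight_eq_height hA.1 hA.2, vertexHeight_eq_height hB.1 hB.2,
          height_succ _ (by omega), height_succ _ (by omega), h] at hb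
        have hm := vertexHeight_lt_of_height_lt (τ := τ) (n := n) (i := i) (j := j) (k := k)
          (l := l) (m := m) hik (by omega) (by omega) (by omega) (by omega) (by linarith)
        have ham : a < m := by
          rcases eq_or_lt_of_le (Nat.le_of_lt_succ hab) with rfl | h
          · linarith
          · exact h
        obtain ⟨q, h1, h2, h3⟩ := ih ham (by omega) (by omega) hm
        exact ⟨q, h1, by omega, h3⟩
      · rw [vertexHeight, vertexHeight, if_neg hA, if_neg (mt hint.mpr hA)] at hb
        exact absurd hb (lt_irrefl _)
    · exact absurd hb (vertexHeight_lt_of_side_lt h).not_gt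

theorem exists_side_lt_of_vertexHeight_lt {i j k l a : ℕ} (hik : i ≠ k) (hia : i ≤ a) (hka : k ≤ a)
    (haj : a < j) (hal : a < l) (ha : vertexHeight τ n k l a < vertexHeight τ n i j a) :
    ∃ p, i ≤ p ∧ k ≤ p ∧ p ≤ a ∧ side τ k l p < side τ i j p := by
  by_cases h : vertexHeight τ n i j (max i k) ≤ vertexHeight τ n k l (max i k)
  · have hlt : max i k < a := by
      refine lt_of_le_of_ne (max_le hia hka) ?_
      rintro rfl
      linarith
    obtain ⟨q, h1, h2, h3⟩ := exists_side_lt hik (le_max_left i k) (le_max_right i k) hlt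
      haj.le hal.le h ha
    exact ⟨q, by omega, by omega, h2, h3⟩
  · refine ⟨max i k, le_max_left i k, le_max_right i k, max_le hia hka, ?_⟩
    by_contra hs
    rcases eq_or_lt_of_le (not_lt.mp hs) with hs | hs
    · have := interior_iff_of_side_eq hs
      omega
    · exact h (vertexHeight_lt_of_side_lt hs).le

theorem sign_of_side_lt_left {i j k l p : ℕ} (hip : i ≤ p) (hpj : p ≤ j)
    (h : side τ k l p < side τ i j p) : p = i ∨ p = j ∨ τ i p j = true := by
  by_contra! hc
  have h1 : i < p ∧ p < j := ⟨lt_of_le_of_ne hip hc.1.symm, lt_of_le_of_ne hpj hc.2.1⟩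
  have h2 := neg_one_le_side (τ := τ) k l p
  simp only [side.eq_def _ i, h1, hc.2.2] at h
  simp at h
  omega

theorem sign_of_side_lt_right {i j k l p : ℕ} (hkp : k ≤ p) (hpl : p ≤ l)
    (h : side τ k l p < side τ i j p) : p = k ∨ p = l ∨ τ k p l = false := by
  by_contra! hc
  have h1 : k < p ∧ p < l := ⟨lt_of_le_of_ne hkp hc.1.symm, lt_of_le_of_ne hpl hc.2.1⟩
  have h2 := side_le_one (τ := τ) i j p
  have h3 : τ k p l = true := by simpa using hc.2.2
  simp only [side.eq_def _ k, h1, h3] at h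
  simp at h
  omega

/-- Two edges are not separated by three vertices in an alternating way, where a common right
endpoint may play the role of the last vertex. -/
theorem not_side_alternating (h4 : FourPoint τ n) (h5 : FivePoint τ n) {i j k l p q r : ℕ}
    (hjn : j < n) (hln : l < n) (hip : i ≤ p) (hkp : k ≤ p) (hpq : p < q) (hqr : q < r)
    (hrj : r ≤ j) (hrl : r ≤ l) (hp : side τ k l p < side τ i j p)
    (hq : side τ i j q < side τ k l q) (hr : r = j ∧ r = l ∨ side τ k l r < side τ i j r) :
    False := by
  have hqi : τ i q j = false := by
    have := sign_of_side_lt_right (by omega) (by omega) hq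
    grind
  have hqk : τ k q l = true := by
    have := sign_of_side_lt_left (by omega) (by omega) hq
    grind
  have hpi : p = i ∨ τ i p j = true := by
    have := sign_of_side_lt_left (by omega) (by omega) hp
    grind
  have hpk : p = k ∨ τ k p l = false := by
    have := sign_of_side_lt_right (by omega) (by omega) hp
    grind
  have hri : r = j ∨ τ i r j = true := by
    rcases hr with hr | hr
    · exact Or.inl hr.1
    · have := sign_of_side_lt_left (by omega) (by omega) hr
      grind
  have hrk : r = l ∨ τ k r l = false := by
    rcases hr with hr | hr
    · exact Or.inl hr.2
    · have := sign_of_side_lt_right (by omega) (by omega) hr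
      grind
  have h1 := sign_of_alternating h4 h5 hip hpq hqr hrj hjn (by simpa [hqi] using hpi)
    (by simpa [hqi] using hri)
  have h2 := sign_of_alternating h4 h5 hkp hpq hqr hrl hln (by simpa [hqk] using hpk)
    (by simpa [hqk] using hrk)
  rw [h1, hqi, hqk] at h2
  exact Bool.false_ne_true h2

theorem not_vertexHeight_alternating (h4 : FourPoint τ n) (h5 : FivePoint τ n) {i j k l a b c : ℕ}
    (hjn : j < n) (hln : l < n) (hik : i ≠ k) (hia : i ≤ a) (hka : k ≤ a) (hab : a < b)
    (hbc : b < c) (hcj : c ≤ j) (hcl : c ≤ l)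
    (ha : vertexHeight τ n k l a < vertexHeight τ n i j a)
    (hb : vertexHeight τ n i j b < vertexHeight τ n k l b) :
    ¬ vertexHeight τ n k l c < vertexHeight τ n i j c := by
  intro hc
  obtain ⟨p, hip, hkp, hpa, hp⟩ := exists_side_lt_of_vertexHeight_lt hik hia hka (by omega)
    (by omega) ha
  obtain ⟨q, haq, hqb, hq⟩ := exists_side_lt hik.symm hka hia hab (by omega) (by omega) ha.le hb
  obtain ⟨r, hbr, hrc, hr⟩ := exists_side_lt hik (by omega) (by omega) hbc hcj hcl hb.le hc
  exact not_side_alternating h4 h5 hjn hln hip hkp (by omega) (by omega) (by omega) (by omega)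
    hp hq (Or.inr hr)

theorem vertexHeight_le_of_common_right (h4 : FourPoint τ n) (h5 : FivePoint τ n) {i j k a b : ℕ}
    (hjn : j < n) (hik : i ≠ k) (hia : i ≤ a) (hka : k ≤ a) (hab : a < b) (hbj : b ≤ j)
    (ha : vertexHeight τ n k j a < vertexHeight τ n i j a) :
    vertexHeight τ n k j b ≤ vertexHeight τ n i j b := by
  by_contra! hb
  have hbj' : b < j := by
    refine lt_of_le_of_ne hbj ?_
    rintro rfl
    simp [vertexHeight_right] at hb
  obtain ⟨p, hip, hkp, hpa, hp⟩ := exists_side_lt_of_vertexHeight_lt hik hia hka (by omega)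
    (by omega) ha
  obtain ⟨q, haq, hqb, hq⟩ := exists_side_lt hik.symm hka hia hab (by omega) (by omega) ha.le hb
  exact not_side_alternating h4 h5 hjn hjn hip hkp (by omega) (by omega) le_rfl le_rfl
    hp hq (Or.inl ⟨rfl, rfl⟩)

theorem side_le_of_startsBelow (h4 : FourPoint τ n) {i j l m : ℕ} (hjn : j < n) (hln : l < n)
    (him : i < m) (hmj : m ≤ j) (hml : m ≤ l) (h : StartsBelow τ i l j) :
    side τ i l m ≤ side τ i j m := by
  by_contra! hs
  have hj := sign_of_side_lt_right him.le hmj hs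
  have hl := sign_of_side_lt_left him.le hml hs
  rcases h with ⟨hlt, h⟩ | ⟨hlt, h⟩
  · rcases eq_or_lt_of_le hml with rfl | hml
    · grind
    · have h' : τ i m j ≠ τ i l j := by grind
      have := (h4 him hml hlt hjn h').1
      grind
  · rcases eq_or_lt_of_le hmj with rfl | hmj
    · grind
    · have h' : τ i m l ≠ τ i j l := by grind
      have := (h4 him hmj hlt hln h').1
      grind

theorem height_lt_of_startsBelow (h4 : FourPoint τ n) {i j l m : ℕ} (hjn : j < n) (hln : l < n)
    (him : i ≤ m) (hmj : m < j) (hml : m < l) (h : StartsBelow τ i l j) :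
    height τ n i l m < height τ n i j m := by
  induction m, him using Nat.le_induction with
  | base => rw [height_self, height_self]; exact startHeight_lt h4 hml hmj hln hjn h
  | succ m him ih =>
    have hs : (side τ i l (m + 1) : ℝ) ≤ side τ i j (m + 1) := by
      exact_mod_cast side_le_of_startsBelow h4 hjn hln (by omega) hmj.le hml.le h
    have := ih (by omega) (by omega)
    rw [height_succ _ him, height_succ _ him]
    linarith

theorem vertexHeight_le_of_startsBelow (h4 : FourPoint τ n) {i j l m : ℕ} (hjn : j < n)
    (hln : l < n) (him : i ≤ m) (hmj : m ≤ j) (hml : m ≤ l) (h : StartsBelow τ i l j) :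
    vertexHeight τ n i l m ≤ vertexHeight τ n i j m := by
  rcases eq_or_lt_of_le him with rfl | him
  · simp [vertexHeight_left]
  rcases eq_or_lt_of_le (side_le_of_startsBelow h4 hjn hln him hmj hml h) with hs | hs
  · have hint := interior_iff_of_side_eq hs
    by_cases hA : i < m ∧ m < j
    · have hB := hint.mp hA
      rw [vertexHeight_eq_height hA.1 hA.2, vertexHeight_eq_height hB.1 hB.2]
      exact (height_lt_of_startsBelow h4 hjn hln him.le hA.2 hB.2 h).le
    · rw [vertexHeight, vertexHeight, if_neg hA, if_neg (mt hint.mpr hA)]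
  · exact (vertexHeight_lt_of_side_lt hs).le

theorem height_ne (h4 : FourPoint τ n) {i j k l m : ℕ} (hjn : j < n) (hln : l < n)
    (hne : i = k → j ≠ l) (him : i ≤ m) (hkm : k ≤ m) (hmj : m < j) (hml : m < l) :
    height τ n i j m ≠ height τ n k l m := by
  induction m, max_le him hkm using Nat.le_induction with
  | base =>
    rcases lt_trichotomy i k with hik | rfl | hik
    · rw [max_eq_right hik.le] at *
      have h0 := startHeight_nonneg (τ := τ) (n := n) k l
      have h1 := startHeight_lt_one (τ := τ) (n := n) k l
      rw [height_self k l]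
      cases hτ : τ i k j
      · linarith [height_lt_neg_one (n := n) hik hmj hτ]
      · linarith [one_lt_height (n := n) hik hmj hτ]
    · rw [max_self] at *
      rw [height_self, height_self]
      exact startHeight_ne h4 hmj hml hjn hln (hne rfl)
    · rw [max_eq_left hik.le] at *
      have h0 := startHeight_nonneg (τ := τ) (n := n) i j
      have h1 := startHeight_lt_one (τ := τ) (n := n) i j
      rw [height_self i j]
      cases hτ : τ k i l
      · linarith [height_lt_neg_one (n := n) hik hml hτ]
      · linarith [one_lt_height (n := n) hik hml hτ]
  | succ m hm ih =>
    rw [max_le_iff] at hm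
    rcases lt_trichotomy (side τ i j (m + 1)) (side τ k l (m + 1)) with h | h | h
    · exact (height_lt_of_side_lt (by omega) (by omega) h).ne
    · have := ih hm.1 hm.2 (by omega) (by omega)
      rw [height_succ _ hm.1, height_succ _ hm.2, h]
      intro heq
      exact this (by linarith)
    · exact (height_lt_of_side_lt (by omega) (by omega) h).ne'

theorem vertexHeight_ne (h4 : FourPoint τ n) {i j k l m : ℕ} (hjn : j < n) (hln : l < n)
    (hne : i = k → j ≠ l) (him : i < m) (hkm : k < m) (hmj : m < j) (hml : m < l) :
    vertexHeight τ n i j m ≠ vertexHeight τ n k l m := by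
  rw [vertexHeight_eq_height him hmj, vertexHeight_eq_height hkm hml]
  exact height_ne h4 hjn hln hne him.le hkm.le hmj hml

theorem vertexHeight_ne_zero {i j m : ℕ} (him : i < m) (hmj : m < j) :
    vertexHeight τ n i j m ≠ 0 := by
  cases h : τ i m j
  · linarith [vertexHeight_lt_neg_one (n := n) him hmj h]
  · linarith [one_lt_vertexHeight (n := n) him hmj h]

/-- The order of two distinct edges changes between `m` and `m + 1`. -/
def Changes (τ : ℕ → ℕ → ℕ → Bool) (n i j k l m : ℕ) : Prop :=
  (vertexHeight τ n i j m - vertexHeight τ n k l m) *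
    (vertexHeight τ n i j (m + 1) - vertexHeight τ n k l (m + 1)) < 0

theorem changes_iff {i j k l m : ℕ} : Changes τ n i j k l m ↔
    (vertexHeight τ n k l m < vertexHeight τ n i j m ∧
      vertexHeight τ n i j (m + 1) < vertexHeight τ n k l (m + 1)) ∨
    (vertexHeight τ n i j m < vertexHeight τ n k l m ∧
      vertexHeight τ n k l (m + 1) < vertexHeight τ n i j (m + 1)) := by
  simp only [Changes, mul_neg_iff, sub_pos, sub_neg]

theorem not_changes_of_common_left (h4 : FourPoint τ n) {i j l m : ℕ} (hjn : j < n) (hln : l < n)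
    (hne : j ≠ l) (him : i ≤ m) (hmj : m + 1 ≤ j) (hml : m + 1 ≤ l) :
    ¬ Changes τ n i j i l m := by
  rw [changes_iff]
  rcases startsBelow_total (τ := τ) (i := i) hne with h | h
  · have h1 := vertexHeight_le_of_startsBelow h4 hln hjn him (by omega) (by omega) h
    have h2 := vertexHeight_le_of_startsBelow h4 hln hjn (m := m + 1) (by omega) hml hmj h
    rintro (h' | h') <;> linarith
  · have h1 := vertexHeight_le_of_startsBelow h4 hjn hln him (by omega) (by omega) h
    have h2 := vertexHeight_le_of_startsBelow h4 hjn hln (m := m + 1) (by omega) hmj hml h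
    rintro (h' | h') <;> linarith

theorem not_changes_of_common_right (h4 : FourPoint τ n) (h5 : FivePoint τ n) {i j k m : ℕ}
    (hjn : j < n) (hne : i ≠ k) (him : i ≤ m) (hkm : k ≤ m) (hmj : m + 1 ≤ j) :
    ¬ Changes τ n i j k j m := by
  rw [changes_iff]
  rintro (⟨h, h'⟩ | ⟨h, h'⟩)
  · exact h'.not_ge
      (vertexHeight_le_of_common_right h4 h5 hjn hne him hkm (Nat.lt_succ_self m) hmj h)
  · exact h'.not_ge
      (vertexHeight_le_of_common_right h4 h5 hjn hne.symm hkm him (Nat.lt_succ_self m) hmj h)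

theorem not_changes_twice (h4 : FourPoint τ n) (h5 : FivePoint τ n) {i j k l m m' : ℕ}
    (hjn : j < n) (hln : l < n) (hne : i ≠ k) (him : i ≤ m) (hkm : k ≤ m) (hmm : m < m')
    (hmj : m' + 1 ≤ j) (hml : m' + 1 ≤ l) (h : Changes τ n i j k l m) :
    ¬ Changes τ n i j k l m' := by
  have key : ∀ {i j k l : ℕ}, j < n → l < n → i ≠ k → i ≤ m → k ≤ m → m' + 1 ≤ j → m' + 1 ≤ l →
      vertexHeight τ n k l m < vertexHeight τ n i j m →
      vertexHeight τ n i j (m + 1) < vertexHeight τ n k l (m + 1) →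
      ∀ c, m < c → c ≤ m' + 1 → ¬ vertexHeight τ n k l c < vertexHeight τ n i j c := by
    intro i j k l hjn hln hne him hkm hmj hml h1 h2 c hc hc' h3
    rcases eq_or_lt_of_le (Nat.succ_le_of_lt hc) with rfl | hlt
    · exact lt_asymm h2 h3
    · exact not_vertexHeight_alternating h4 h5 hjn hln hne him hkm (Nat.lt_succ_self m) hlt
        (by omega) (by omega) h1 h2 h3
  rw [changes_iff] at h ⊢
  rcases h with ⟨h1, h2⟩ | ⟨h1, h2⟩
  · have := key hjn hln hne him hkm hmj hml h1 h2
    rintro (⟨h3, -⟩ | ⟨-, h3⟩)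
    · exact this m' hmm (by omega) h3
    · exact this (m' + 1) (by omega) le_rfl h3
  · have := key hln hjn hne.symm hkm him hml hmj h1 h2
    rintro (⟨-, h3⟩ | ⟨h3, -⟩)
    · exact this (m' + 1) (by omega) le_rfl h3
    · exact this m' hmm (by omega) h3

/-- The piecewise linear interpolation of the points `(m, H m)` for `m ≤ n`. -/
noncomputable def interpolate (H : ℕ → ℝ) (n : ℕ) (t : ℝ) : ℝ :=
  H 0 + ∑ m ∈ Finset.range n, (H (m + 1) - H m) * max 0 (min 1 (t - m))

theorem continuous_interpolate (H : ℕ → ℝ) (n : ℕ) : Continuous (interpolate H n) := by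
  unfold interpolate
  fun_prop

theorem interpolate_eq (H : ℕ → ℝ) {n m : ℕ} {t : ℝ} (hm : m < n) (h1 : (m : ℝ) ≤ t)
    (h2 : t ≤ m + 1) : interpolate H n t = H m + (H (m + 1) - H m) * (t - m) := by
  have hleft : ∀ N ≤ m, interpolate H N t = H N := by
    intro N hN
    unfold interpolate
    rw [Finset.sum_congr rfl (g := fun p => H (p + 1) - H p), Finset.sum_range_sub]
    · ring
    · intro p hp
      have hp' : (p : ℝ) + 1 ≤ m := by
        have := Finset.mem_range.mp hp
        exact_mod_cast (by omega : p + 1 ≤ m)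
      rw [min_eq_left (by linarith), max_eq_right zero_le_one, mul_one]
  induction n, Nat.succ_le_of_lt hm using Nat.le_induction with
  | base =>
    have := hleft m le_rfl
    unfold interpolate at this ⊢
    rw [Finset.sum_range_succ, ← add_assoc, this, min_eq_right (by linarith),
      max_eq_right (by linarith)]
  | succ N hN ih =>
    have := ih (by omega)
    have hN' : (m : ℝ) + 1 ≤ N := by exact_mod_cast hN
    unfold interpolate at this ⊢
    rw [Finset.sum_range_succ, ← add_assoc, this, min_eq_right (by linarith),
      max_eq_left (by linarith)]
    ring

theorem interpolate_natCast (H : ℕ → ℝ) {n m : ℕ} (hm : m < n) : interpolate H n m = H m := by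
  rw [interpolate_eq H hm le_rfl (by linarith)]
  ring

/-- The edge `{i, j}` of the drawing. -/
noncomputable def curve (τ : ℕ → ℕ → ℕ → Bool) (n i j : ℕ) : ℝ → ℝ :=
  interpolate (vertexHeight τ n i j) n

theorem curve_sub_curve {i j k l m : ℕ} {t : ℝ} (hm : m < n) (h1 : (m : ℝ) ≤ t) (h2 : t ≤ m + 1) :
    curve τ n i j t - curve τ n k l t =
      (vertexHeight τ n i j m - vertexHeight τ n k l m) * (m + 1 - t) +
      (vertexHeight τ n i j (m + 1) - vertexHeight τ n k l (m + 1)) * (t - m) := by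
  unfold curve
  rw [interpolate_eq _ hm h1 h2, interpolate_eq _ hm h1 h2]
  ring

theorem exists_changes_of_curve_eq (h4 : FourPoint τ n) {i j k l : ℕ} {t : ℝ} (hjn : j < n)
    (hln : l < n) (hne : i = k → j ≠ l) (hit : (i : ℝ) < t) (hkt : (k : ℝ) < t)
    (htj : t < j) (htl : t < l) (h : curve τ n i j t = curve τ n k l t) :
    ∃ m : ℕ, i ≤ m ∧ k ≤ m ∧ m + 1 ≤ j ∧ m + 1 ≤ l ∧ (m : ℝ) < t ∧ t < m + 1 ∧
      Changes τ n i j k l m := by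
  have ht : 0 ≤ t := i.cast_nonneg.trans hit.le
  have him : i ≤ ⌊t⌋₊ := Nat.le_floor hit.le
  have hkm : k ≤ ⌊t⌋₊ := Nat.le_floor hkt.le
  have hmj : ⌊t⌋₊ < j := (Nat.floor_lt ht).mpr htj
  have hml : ⌊t⌋₊ < l := (Nat.floor_lt ht).mpr htl
  have hmt : (⌊t⌋₊ : ℝ) ≤ t := Nat.floor_le ht
  have htm : t < ⌊t⌋₊ + 1 := Nat.lt_floor_add_one t
  generalize ⌊t⌋₊ = m at *
  have hmt' : (m : ℝ) < t := by
    refine lt_of_le_of_ne hmt ?_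
    rintro rfl
    unfold curve at h
    rw [interpolate_natCast _ (by omega), interpolate_natCast _ (by omega)] at h
    exact vertexHeight_ne h4 hjn hln hne (by exact_mod_cast hit) (by exact_mod_cast hkt) hmj hml h
  refine ⟨m, him, hkm, hmj, hml, hmt', htm, ?_⟩
  have hz := curve_sub_curve (τ := τ) (i := i) (j := j) (k := k) (l := l)
    (by omega : m < n) hmt'.le htm.le
  rw [h, sub_self] at hz
  have hnz : ¬ (vertexHeight τ n i j m - vertexHeight τ n k l m = 0 ∧
      vertexHeight τ n i j (m + 1) - vertexHeight τ n k l (m + 1) = 0) := by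
    rintro ⟨z1, z2⟩
    rw [sub_eq_zero] at z1 z2
    by_cases hi : i = m <;> by_cases hk : k = m <;> by_cases hj : j = m + 1 <;>
      by_cases hl : l = m + 1
    all_goals first
      | omega
      | exact vertexHeight_ne (τ := τ) h4 hjn hln hne (by omega : i < m) (by omega) hmj hml z1
      | exact vertexHeight_ne (τ := τ) h4 hjn hln hne (by omega : i < m + 1) (by omega) (by omega)
          (by omega) z2
      | (subst hi; rw [vertexHeight_left] at z1
         exact vertexHeight_ne_zero (τ := τ) (by omega) hml z1.symm)
      | (subst hk; rw [vertexHeight_left] at z1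
         exact vertexHeight_ne_zero (τ := τ) (by omega) hmj z1)
      | (subst hj; rw [vertexHeight_right] at z2
         exact vertexHeight_ne_zero (τ := τ) (by omega) (by omega) z2.symm)
      | (subst hl; rw [vertexHeight_right] at z2
         exact vertexHeight_ne_zero (τ := τ) (by omega) (by omega) z2)
  unfold Changes
  generalize vertexHeight τ n i j m - vertexHeight τ n k l m = u at *
  generalize vertexHeight τ n i j (m + 1) - vertexHeight τ n k l (m + 1) = v at *
  have ha : 0 < m + 1 - t := by linarith
  have hb : 0 < t - m := by linarith
  rcases lt_trichotomy u 0 with hu | hu | hu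
  · have : 0 < v := by
      by_contra hv
      nlinarith [mul_neg_of_neg_of_pos hu ha]
    exact mul_neg_of_neg_of_pos hu this
  · exact absurd ⟨hu, by simpa [hu, hb.ne'] using hz⟩ hnz
  · have : v < 0 := by
      by_contra hv
      nlinarith [mul_pos hu ha]
    exact mul_neg_of_pos_of_neg hu this

/-- In a strip where the order changes, the edges are in different order before and after any
crossing. -/
theorem mul_neg_of_changes {i j k l m : ℕ} {s t u : ℝ} (hm : m < n) (h : Changes τ n i j k l m)
    (hms : (m : ℝ) ≤ s) (hst : s < t) (htu : t < u) (hum : u ≤ m + 1)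
    (ht : curve τ n i j t = curve τ n k l t) :
    (curve τ n i j s - curve τ n k l s) * (curve τ n i j u - curve τ n k l u) < 0 := by
  have hz := curve_sub_curve (τ := τ) (i := i) (j := j) (k := k) (l := l) (t := t) hm
    (by linarith) (by linarith)
  rw [ht, sub_self] at hz
  rw [curve_sub_curve hm hms (by linarith), curve_sub_curve hm (by linarith) hum]
  unfold Changes at h
  generalize vertexHeight τ n i j m - vertexHeight τ n k l m = a at *
  generalize vertexHeight τ n i j (m + 1) - vertexHeight τ n k l (m + 1) = b at *
  have e1 : a * (m + 1 - s) + b * (s - m) = (b - a) * (s - t) := by linarith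
  have e2 : a * (m + 1 - u) + b * (u - m) = (b - a) * (u - t) := by linarith
  rw [e1, e2]
  have hab : 0 < (b - a) ^ 2 := by nlinarith [sq_nonneg a, sq_nonneg b]
  have := mul_pos hab (mul_pos (sub_pos.mpr hst) (sub_pos.mpr htu))
  nlinarith

/-- Two edges with distinct left endpoints cross at most once. -/
theorem curve_eq_unique (h4 : FourPoint τ n) (h5 : FivePoint τ n) {i j k l : ℕ} {s t : ℝ}
    (hjn : j < n) (hln : l < n) (hne : i ≠ k) (his : (i : ℝ) < s) (hks : (k : ℝ) < s)
    (hst : s < t) (htj : t < j) (htl : t < l) (hs : curve τ n i j s = curve τ n k l s) :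
    curve τ n i j t ≠ curve τ n k l t := by
  intro ht
  obtain ⟨m, him, hkm, hmj, hml, hms, hsm, hm⟩ := exists_changes_of_curve_eq h4 hjn hln
    (fun h => absurd h hne) his hks (by linarith) (by linarith) hs
  obtain ⟨m', -, -, hmj', hml', hmt, htm, hm'⟩ := exists_changes_of_curve_eq h4 hjn hln
    (fun h => absurd h hne) (by linarith) (by linarith) htj htl ht
  have hmm : m ≤ m' := by
    have : (m : ℝ) < m' + 1 := by linarith
    exact Nat.lt_succ_iff.mp (by exact_mod_cast this)
  rcases eq_or_lt_of_le hmm with rfl | hmm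
  · have := mul_neg_of_changes (s := m) (by omega) hm le_rfl hms hst htm.le hs
    rw [ht, sub_self, mul_zero] at this
    exact lt_irrefl _ this
  · exact not_changes_twice h4 h5 hjn hln hne him hkm hmm hmj' hml' hm hm'

theorem curve_ne_of_common_left (h4 : FourPoint τ n) {i j l : ℕ} {t : ℝ}
    (hjn : j < n) (hln : l < n) (hne : j ≠ l) (hit : (i : ℝ) < t) (htj : t < j) (htl : t < l) :
    curve τ n i j t ≠ curve τ n i l t := by
  intro h
  obtain ⟨m, him, -, hmj, hml, -, -, hm⟩ := exists_changes_of_curve_eq h4 hjn hln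
    (fun _ => hne) hit hit htj htl h
  exact not_changes_of_common_left h4 hjn hln hne him hmj hml hm

theorem curve_ne_of_common_right (h4 : FourPoint τ n) (h5 : FivePoint τ n) {i j k : ℕ} {t : ℝ}
    (hjn : j < n) (hne : i ≠ k) (hit : (i : ℝ) < t) (hkt : (k : ℝ) < t) (htj : t < j) :
    curve τ n i j t ≠ curve τ n k j t := by
  intro h
  obtain ⟨m, him, hkm, hmj, -, -, -, hm⟩ := exists_changes_of_curve_eq h4 hjn hjn
    (fun h => absurd h hne) hit hkt htj htj h
  exact not_changes_of_common_right h4 h5 hjn hne him hkm hmj hm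

/-- Two distinct edges cross at most once. -/
theorem subsingleton_crossings (h4 : FourPoint τ n) (h5 : FivePoint τ n) {i j k l : ℕ}
    (hjn : j < n) (hln : l < n) (hne : i = k → j ≠ l) :
    {t : ℝ | max (i : ℝ) k < t ∧ t < min (j : ℝ) l ∧
      curve τ n i j t = curve τ n k l t}.Subsingleton := by
  rintro s ⟨h1, h2, h3⟩ t ⟨h1', h2', h3'⟩
  rw [max_lt_iff] at h1 h1'
  rw [lt_min_iff] at h2 h2'
  rcases eq_or_ne i k with rfl | hik
  · exact absurd h3 (curve_ne_of_common_left h4 hjn hln (hne rfl) h1.1 h2.1 h2.2)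
  · by_contra hst
    rcases lt_or_gt_of_ne hst with hst | hst
    · exact curve_eq_unique h4 h5 hjn hln hik h1.1 h1.2 hst h2'.1 h2'.2 h3 h3'
    · exact curve_eq_unique h4 h5 hjn hln hik h1'.1 h1'.2 hst h2.1 h2.2 h3' h3

/-- The drawing of a signature function satisfying the four-point and five-point conditions. -/
noncomputable def drawing (h4 : FourPoint τ n) (h5 : FivePoint τ n) : XMonotoneDrawing n where
  x i := (i : ℕ)
  x_strictMono i j h := Nat.cast_lt.mpr h
  e i j := curve τ n i j
  cont i j _ := (continuous_interpolate _ _).continuousOn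
  end_left i j _ := by simp [curve, interpolate_natCast _ i.2, vertexHeight_left]
  end_right i j _ := by simp [curve, interpolate_natCast _ j.2, vertexHeight_right]
  avoid_vertex i m j him hmj := by
    simpa only [curve, interpolate_natCast _ m.2] using vertexHeight_ne_zero him hmj
  cross_finite i j k l _ _ hne :=
    (subsingleton_crossings h4 h5 j.2 l.2 fun h h' => hne (by ext <;> assumption)).finite
  sign_change i j k l _ _ hne t hlt htl ht := by
    rw [max_lt_iff] at hlt
    rw [lt_min_iff] at htl
    obtain ⟨m, -, -, hmj, -, hmt, htm, hm⟩ := exists_changes_of_curve_eq h4 j.2 l.2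
      (fun h h' => hne (by ext <;> assumption)) hlt.1 hlt.2 htl.1 htl.2 ht
    refine ⟨min (t - m) (m + 1 - t), lt_min (by linarith) (by linarith), ?_⟩
    intro s _ hs hst u _ htu hu
    have h1 := min_le_left (t - m) (m + 1 - t)
    have h2 := min_le_right (t - m) (m + 1 - t)
    exact mul_neg_of_changes (by omega) hm (by linarith) hst htu (by linarith) ht

theorem simple_drawing (h4 : FourPoint τ n) (h5 : FivePoint τ n) : (drawing h4 h5).Simple := by
  intro i j k l hij hkl hne
  have hne' : (i : ℕ) = k → (j : ℕ) ≠ l := fun h h' => hne (by ext <;> assumption)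
  have hss := subsingleton_crossings h4 h5 j.2 l.2 hne'
  constructor
  · intro hadj
    have hempty : (drawing h4 h5).crossSet i j k l = ∅ := by
      refine Set.eq_empty_of_forall_notMem ?_
      rintro t ⟨hlt, htl, ht⟩
      rw [max_lt_iff] at hlt
      rw [lt_min_iff] at htl
      rcases hadj with rfl | rfl | rfl | rfl
      · exact curve_ne_of_common_left h4 j.2 l.2 (hne' rfl) hlt.1 htl.1 htl.2 ht
      · exact lt_asymm hlt.1 htl.2
      · exact lt_asymm hlt.2 htl.1
      · exact curve_ne_of_common_right h4 h5 j.2 (fun h => hne' h rfl) hlt.1 hlt.2 htl.1 ht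
    rw [XMonotoneDrawing.crossCount, hempty, Set.ncard_empty]
  · intro _
    exact (Set.ncard_le_one hss.finite).mpr hss

theorem sig_drawing (h4 : FourPoint τ n) (h5 : FivePoint τ n) {i j k : Fin n} (hij : i < j)
    (hjk : j < k) : (drawing h4 h5).sig i j k = τ i j k := by
  have he : (drawing h4 h5).e i k ((drawing h4 h5).x j) = vertexHeight τ n i k j :=
    interpolate_natCast _ j.2
  rw [XMonotoneDrawing.sig, he]
  cases h : τ i j k
  · have := vertexHeight_lt_neg_one (n := n) hij hjk h
    rw [if_neg (by linarith)]
  · have := one_lt_vertexHeight (n := n) hij hjk h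
    rw [if_pos (by linarith)]

/-- The extension of a signature function on `Fin n` to all natural numbers. -/
def extend (σ : Fin n → Fin n → Fin n → Bool) (a b c : ℕ) : Bool :=
  if h : a < n ∧ b < n ∧ c < n then σ ⟨a, h.1⟩ ⟨b, h.2.1⟩ ⟨c, h.2.2⟩ else true

theorem extend_val (σ : Fin n → Fin n → Fin n → Bool) (a b c : Fin n) :
    extend σ a b c = σ a b c := by
  simp [extend]

theorem fourPoint_extend {σ : Fin n → Fin n → Fin n → Bool} (h : Admissible σ) :
    FourPoint (extend σ) n := by
  intro a b c d hab hbc hcd hd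
  lift d to Fin n using hd
  lift c to Fin n using by omega
  lift b to Fin n using by omega
  lift a to Fin n using by omega
  simp only [extend_val]
  exact (allowedForm_iff _ _ _ _).mp (h a b c d hab hbc hcd)

theorem fivePoint_extend {σ : Fin n → Fin n → Fin n → Bool}
    (h : ¬ ∃ a b c d e : Fin n, a < b ∧ b < c ∧ c < d ∧ d < e ∧
      σ a b e = σ a d e ∧ σ b c d = σ a d e ∧ σ a c e = !(σ a d e)) :
    FivePoint (extend σ) n := by
  intro a b c d e hab hbc hcd hde he
  lift e to Fin n using he
  lift d to Fin n using by omega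
  lift c to Fin n using by omega
  lift b to Fin n using by omega
  lift a to Fin n using by omega
  simp only [extend_val]
  intro h1 h2
  by_contra h3
  refine h ⟨a, b, c, d, e, hab, hbc, hcd, hde, ?_⟩
  revert h1 h2 h3
  cases σ a b e <;> cases σ a c e <;> cases σ a d e <;> cases σ b c d <;> simp

end Sig

/-- A signature function `σ` on the triples of `[n]` is realizable by
a simple x-monotone drawing of `K n` if and only if `σ` is admissible and there is no
5-tuple `a < b < c < d < e` with `σ(a,b,e) = σ(a,d,e) = σ(b,c,d)` equal to the opposite
of `σ(a,c,e)`. -/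
theorem simple_realizable_iff_admissible_and_no_forbidden_5tuple (n : ℕ)
    (σ : Fin n → Fin n → Fin n → Bool) :
    (∃ D : XMonotoneDrawing n, D.Simple ∧ D.Realizes σ) ↔
      (Sig.Admissible σ ∧
        ¬ ∃ a b c d e : Fin n, a < b ∧ b < c ∧ c < d ∧ d < e ∧
          σ a b e = σ a d e ∧ σ b c d = σ a d e ∧ σ a c e = !(σ a d e)) := by
  constructor
  · rintro ⟨D, hD, hσ⟩
    constructor
    · intro a b c d hab hbc hcd
      rw [← hσ a b c hab hbc, ← hσ a b d hab (hbc.trans hcd), ← hσ a c d (hab.trans hbc) hcd,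
        ← hσ b c d hbc hcd]
      exact hD.admissible_sig a b c d hab hbc hcd
    · rintro ⟨a, b, c, d, e, hab, hbc, hcd, hde, h1, h2, h3⟩
      have hac := hab.trans hbc
      have hce := hcd.trans hde
      rw [← hσ a b e hab (hbc.trans hce), ← hσ a d e (hac.trans hcd) hde] at h1
      rw [← hσ b c d hbc hcd, ← hσ a d e (hac.trans hcd) hde] at h2
      rw [← hσ a c e hac hce, ← hσ a d e (hac.trans hcd) hde] at h3
      have := hD.sig_middle_eq hab hbc hcd hde (by simp [h1, h3]) (by simp [h3])
      simp [h2, h3] at this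
  · rintro ⟨h4, h5⟩
    refine ⟨Sig.drawing (Sig.fourPoint_extend h4) (Sig.fivePoint_extend h5),
      Sig.simple_drawing _ _, fun i j k hij hjk => ?_⟩
    rw [Sig.sig_drawing _ _ hij hjk, Sig.extend_val]
end
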